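/- arXiv:math/0701800 — 11 statements merged into one kernel-verified Lean document; each statement's English description precedes it below -/
import Mathlib

section
/- Let t and x be real numbers with t > 0, x > 0, 4t²(1+x²) ≤ 1, and 4t²(1 + Y₊(x)²) ≤ 1, where Y₊(u) = u(1 − √(1 − 4t²(1+u²)))/(2t(1+u²)) and Y₋(u) = u(1 + √(1 − 4t²(1+u²)))/(2t(1+u²)). Then Y₋(Y₊(x)) = x. -/
theorem stmt_1 (t x : ℝ) (Yp Ym : ℝ → ℝ)
    (hYp : ∀ u, Yp u = u * (1 - Real.sqrt (1 - 4 * t ^ 2 * (1 + u ^ 2))) / (2 * t * (1 + u ^ 2)))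
    (hYm : ∀ u, Ym u = u * (1 + Real.sqrt (1 - 4 * t ^ 2 * (1 + u ^ 2))) / (2 * t * (1 + u ^ 2)))
    (ht : 0 < t) (hx : 0 < x)
    (h1 : 4 * t ^ 2 * (1 + x ^ 2) ≤ 1)
    (h2 : 4 * t ^ 2 * (1 + (Yp x) ^ 2) ≤ 1) :
    Ym (Yp x) = x := by
  have hs0 := Real.sqrt_nonneg (1 - 4 * t ^ 2 * (1 + x ^ 2))
  have hs2 := Real.sq_sqrt (sub_nonneg.mpr h1)
  have hy := hYp x
  have hm := hYm (Yp x)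
  generalize Real.sqrt (1 - 4 * t ^ 2 * (1 + x ^ 2)) = s at hs0 hs2 hy
  generalize Yp x = y at *
  have hs1 : 0 < 1 + s := by linarith
  have hx1 : 0 < 1 + x ^ 2 := by positivity
  have hy1 : 0 < 1 + y ^ 2 := by positivity
  have key : y * (1 + s) = 2 * t * x := by
    rw [hy, div_mul_eq_mul_div, div_eq_iff (by positivity)]
    linear_combination (-x) * hs2
  have key2 : y ^ 2 * (1 + s) ^ 2 = 4 * t ^ 2 * x ^ 2 := by
    linear_combination (y * (1 + s) + 2 * t * x) * key
  have hsq : 1 - 4 * t ^ 2 * (1 + y ^ 2) = ((1 + y ^ 2) * (1 + s) - 1) ^ 2 := by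
    linear_combination (-(1 + y ^ 2)) * hs2 - (1 + y ^ 2) * key2
  have hnn : 0 ≤ (1 + y ^ 2) * (1 + s) - 1 := by
    nlinarith [mul_nonneg (sq_nonneg y) hs0, sq_nonneg y]
  rw [hm, hsq, Real.sqrt_sq hnn, div_eq_iff (by positivity)]
  linear_combination (1 + y ^ 2) * key
end

section
/- Let t be a real number with 0 < t ≤ 1/3. Define Y : ℝ → ℝ by Y(y) = y(1 − √(1 − 4t²(1+y²)))/(2t(1+y²)) and set yₙ = Y⁽ⁿ⁾(1), the n-fold iterate of Y evaluated at 1. Then for every n ≥ 0 one has 0 < y_{n+1} ≤ yₙ ≤ 1, and for every n ≥ 1 one has 1/y_{n+1} = 1/(t·yₙ) − 1/y_{n−1}. -/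
theorem stmt_2 (t : ℝ) (ht : 0 < t) (ht3 : t ≤ 1 / 3) (Y : ℝ → ℝ)
    (hY : ∀ y, Y y = y * (1 - Real.sqrt (1 - 4 * t ^ 2 * (1 + y ^ 2))) / (2 * t * (1 + y ^ 2))) :
    (∀ n : ℕ, 0 < Y^[n + 1] 1 ∧ Y^[n + 1] 1 ≤ Y^[n] 1 ∧ Y^[n] 1 ≤ 1) ∧
    (∀ n : ℕ, 1 ≤ n →
      1 / Y^[n + 1] 1 = 1 / (t * Y^[n] 1) - 1 / Y^[n - 1] 1) := by
  have key : ∀ x : ℝ, 0 < x → x ≤ 1 →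
      Y x = 2 * t * x / (1 + Real.sqrt (1 - 4 * t ^ 2 * (1 + x ^ 2))) ∧
      0 < Y x ∧ Y x ≤ x ∧ t * (x ^ 2 * Y x ^ 2 + x ^ 2 + Y x ^ 2) = x * Y x := by
    intro x hx hx1
    have hx2 : x ^ 2 ≤ 1 := by nlinarith
    have ht2 : t ^ 2 ≤ 1 / 9 := by nlinarith
    have hD : 0 ≤ 1 - 4 * t ^ 2 * (1 + x ^ 2) := by nlinarith [sq_nonneg t]
    have h1 := hY x
    have hs0 := Real.sqrt_nonneg (1 - 4 * t ^ 2 * (1 + x ^ 2))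
    have hsq := Real.sq_sqrt hD
    generalize Real.sqrt (1 - 4 * t ^ 2 * (1 + x ^ 2)) = s at *
    have e : Y x = 2 * t * x / (1 + s) := by
      rw [h1, div_eq_div_iff (by positivity) (by positivity)]
      linear_combination (-x) * hsq
    have hk : t * (x ^ 2 * Y x ^ 2 + x ^ 2 + Y x ^ 2) = x * Y x := by
      rw [e]
      field_simp
      linear_combination hsq
    refine ⟨e, ?_, ?_, hk⟩
    · rw [e]; positivity
    · rw [e, div_le_iff₀ (by positivity)]
      nlinarith
  have base : ∀ n : ℕ, 0 < Y^[n] 1 ∧ Y^[n] 1 ≤ 1 := by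
    intro n
    induction n with
    | zero => simp
    | succ n ih =>
      rw [Function.iterate_succ_apply']
      obtain ⟨_, h2, h3, _⟩ := key _ ih.1 ih.2
      exact ⟨h2, h3.trans ih.2⟩
  refine ⟨fun n => ?_, fun n hn => ?_⟩
  · obtain ⟨_, h2, h3, _⟩ := key _ (base n).1 (base n).2
    rw [Function.iterate_succ_apply']
    exact ⟨h2, h3, (base n).2⟩
  · obtain ⟨m, rfl⟩ : ∃ m, n = m + 1 := ⟨n - 1, by omega⟩
    rw [Nat.add_sub_cancel, Function.iterate_succ_apply' Y (m + 1)]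
    have hz := base (m + 1)
    have hx := base m
    rw [Function.iterate_succ_apply'] at hz ⊢
    generalize Y^[m] 1 = x at *
    obtain ⟨_, h2, h3, h4⟩ := key x hx.1 hx.2
    obtain ⟨e, -⟩ := key (Y x) hz.1 hz.2
    have hx0 := hx.1
    generalize Y x = z at *
    have hr : z / x ≤ 1 := (div_le_one hx0).2 h3
    have hr0 : 0 < z / x := by positivity
    have hs : Real.sqrt (1 - 4 * t ^ 2 * (1 + z ^ 2)) = 1 - 2 * t * (z / x) := by
      rw [Real.sqrt_eq_iff_mul_self_eq_of_pos (by nlinarith)]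
      field_simp
      linear_combination (4 * t) * h4
    have hp : 0 < 1 - t * (z / x) := by nlinarith
    rw [e, hs, one_div_div]
    field_simp
    ring
end

section
/- Define Y : ℝ → ℝ by Y(y) = 3y(1 − √(1 − (4/9)(1+y²)))/(2(1+y²)) (the kernel root at t = 1/3). Then for every n ≥ 0, the n-fold iterate satisfies Y⁽ⁿ⁾(1) = 1/F(2n+1), where F(m) denotes the m-th Fibonacci number with F(1) = F(2) = 1. -/
theorem cassini_aux (n : ℕ) : (Nat.fib (2 * n + 1) : ℝ) ^ 2 =
    Nat.fib (2 * n + 1) * Nat.fib (2 * n) + (Nat.fib (2 * n) : ℝ) ^ 2 + 1 := by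
  induction n with
  | zero => simp
  | succ k ih =>
    have h1 : Nat.fib (2 * (k + 1)) = Nat.fib (2 * k) + Nat.fib (2 * k + 1) := Nat.fib_add_two
    have h2 : Nat.fib (2 * (k + 1) + 1) = Nat.fib (2 * k + 1) + Nat.fib (2 * (k + 1)) :=
      Nat.fib_add_two
    rw [h2, h1]
    push_cast
    linarith

theorem stmt_3 (Y : ℝ → ℝ)
    (hY : ∀ y, Y y = 3 * y * (1 - Real.sqrt (1 - (4 / 9) * (1 + y ^ 2))) / (2 * (1 + y ^ 2))) :
    ∀ n : ℕ, Y^[n] 1 = 1 / (Nat.fib (2 * n + 1) : ℝ) := by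
  intro n
  induction n with
  | zero => simp
  | succ k ih =>
    rw [Function.iterate_succ_apply', ih, hY]
    have h1 : Nat.fib (2 * (k + 1)) = Nat.fib (2 * k) + Nat.fib (2 * k + 1) := Nat.fib_add_two
    have h2 : Nat.fib (2 * (k + 1) + 1) = Nat.fib (2 * k + 1) + Nat.fib (2 * (k + 1)) :=
      Nat.fib_add_two
    rw [h2, h1]
    push_cast
    have hc := cassini_aux k
    have ha : (0 : ℝ) < Nat.fib (2 * k + 1) := by
      exact_mod_cast Nat.fib_pos.2 (by omega)
    have hb : (0 : ℝ) ≤ Nat.fib (2 * k) := by positivity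
    generalize (Nat.fib (2 * k + 1) : ℝ) = a at *
    generalize (Nat.fib (2 * k) : ℝ) = c at *
    have hs : Real.sqrt (1 - (4 / 9) * (1 + (1 / a) ^ 2)) = (a + 2 * c) / (3 * a) := by
      rw [Real.sqrt_eq_iff_mul_self_eq_of_pos (by positivity)]
      field_simp
      linarith
    rw [hs]
    have hd : 0 < a + (c + a) := by linarith
    have he : 0 < 1 + a ^ 2 := by positivity
    have : 3 * (1 / a) * (1 - (a + 2 * c) / (3 * a)) / (2 * (1 + (1 / a) ^ 2))
        = (a - c) / (1 + a ^ 2) := by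
      have : 1 + (1 / a) ^ 2 = (1 + a ^ 2) / a ^ 2 := by field_simp; ring
      rw [this]
      field_simp
      ring
    rw [this, div_eq_div_iff he.ne' hd.ne']
    linarith
end

section
/- The series ∑_{n≥0} (−1)ⁿ/(F(2n+1)·F(2n+3)), where F denotes the Fibonacci sequence with F(1) = F(2) = 1, converges to a value strictly greater than 2/5 and strictly less than 1/2. -/
theorem fib_step_aux (n : ℕ) : 2 * Nat.fib (2 * n + 1) ≤ Nat.fib (2 * n + 3) := by
  have h1 : Nat.fib (2 * n + 3) = Nat.fib (2 * n + 1) + Nat.fib (2 * n + 2) := Nat.fib_add_two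
  have h2 : Nat.fib (2 * n + 2) = Nat.fib (2 * n) + Nat.fib (2 * n + 1) := Nat.fib_add_two
  omega

theorem fib_pow_aux (n : ℕ) : 2 ^ n ≤ Nat.fib (2 * n + 1) := by
  induction n with
  | zero => simp
  | succ k ih =>
    have h := fib_step_aux k
    have e : 2 * (k + 1) + 1 = 2 * k + 3 := by ring
    rw [e, pow_succ]
    omega

theorem stmt_4 :
    ∃ L : ℝ,
      HasSum (fun n : ℕ => (-1 : ℝ) ^ n / ((Nat.fib (2 * n + 1) : ℝ) * (Nat.fib (2 * n + 3) : ℝ))) L ∧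
      2 / 5 < L ∧ L < 1 / 2 := by
  set f : ℕ → ℝ := fun n => 1 / ((Nat.fib (2 * n + 1) : ℝ) * (Nat.fib (2 * n + 3) : ℝ)) with hf
  have hfun : (fun n : ℕ => (-1 : ℝ) ^ n / ((Nat.fib (2 * n + 1) : ℝ) * (Nat.fib (2 * n + 3) : ℝ)))
      = fun n => (-1 : ℝ) ^ n * f n := by
    funext n
    simp only [hf]
    ring
  rw [hfun]
  have hpos : ∀ n, (0 : ℝ) < Nat.fib (2 * n + 1) := fun n => by
    exact_mod_cast Nat.fib_pos.2 (by omega)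
  have hpos3 : ∀ n, (1 : ℝ) ≤ Nat.fib (2 * n + 3) := fun n => by
    exact_mod_cast Nat.fib_pos.2 (by omega)
  have hanti : Antitone f := by
    apply antitone_nat_of_succ_le
    intro n
    simp only [hf]
    have h1 : (Nat.fib (2 * n + 1) : ℝ) ≤ Nat.fib (2 * (n + 1) + 1) := by
      exact_mod_cast Nat.fib_mono (by omega)
    have h2 : (Nat.fib (2 * n + 3) : ℝ) ≤ Nat.fib (2 * (n + 1) + 3) := by
      exact_mod_cast Nat.fib_mono (by omega)
    have := hpos n
    have := hpos3 n
    apply one_div_le_one_div_of_le (by positivity)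
    gcongr
  have hsum : Summable (fun n => (-1 : ℝ) ^ n * f n) := by
    apply Summable.of_norm_bounded (g := fun n : ℕ => (1 / 2 : ℝ) ^ n) summable_geometric_two
    intro n
    have h0 := hpos n
    have h3 := hpos3 n
    have hp : (2 : ℝ) ^ n ≤ Nat.fib (2 * n + 1) := by exact_mod_cast fib_pow_aux n
    have hfn : 0 ≤ f n := by simp only [hf]; positivity
    rw [norm_mul, norm_pow, norm_neg, norm_one, one_pow, one_mul, Real.norm_of_nonneg hfn,
      one_div_pow]
    simp only [hf]
    apply one_div_le_one_div_of_le (by positivity)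
    nlinarith
  obtain ⟨L, hL⟩ := hsum
  have ht := hL.tendsto_sum_nat
  have hlo := hanti.alternating_series_le_tendsto ht 2
  have hhi := hanti.tendsto_le_alternating_series ht 1
  refine ⟨L, hL, ?_, ?_⟩
  · refine lt_of_lt_of_le ?_ hlo
    norm_num [Finset.sum_range_succ, hf, Nat.fib_add_two]
  · refine lt_of_le_of_lt hhi ?_
    norm_num [Finset.sum_range_succ, hf, Nat.fib_add_two]
end

section
/- Let S = {(1,1), (−1,1), (1,−1)} ⊂ ℤ². Let dₙ be the number of quarter-plane walks of length n with steps S that end on the x-axis. Let t be real with 0 < t ≤ 1/3, define Y : ℝ → ℝ by Y(y) = y(1 − √(1 − 4t²(1+y²)))/(2t(1+y²)) and yₙ = Y⁽ⁿ⁾(1). Then the series ∑_{n≥0} dₙ tⁿ and ∑_{n≥0} (−1)ⁿ yₙ y_{n+1} both converge, and ∑_{n≥0} dₙ tⁿ = (1/t)·∑_{n≥0} (−1)ⁿ yₙ y_{n+1}. -/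
/-- The step set S = {(1,1), (−1,1), (1,−1)}. -/
def stepsS : Set (ℤ × ℤ) := {(1, 1), (-1, 1), (1, -1)}

/-- A quarter-plane walk of length `n` with steps from `S`. -/
def IsQuarterWalk (S : Set (ℤ × ℤ)) (n : ℕ) (p : Fin (n + 1) → ℤ × ℤ) : Prop :=
  p 0 = (0, 0) ∧
  (∀ k : Fin n, p k.succ - p k.castSucc ∈ S) ∧
  (∀ k : Fin (n + 1), 0 ≤ (p k).1 ∧ 0 ≤ (p k).2)

/-- The number of quarter-plane walks of length `n` with steps `S` ending on the x-axis. -/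
noncomputable def numWalksXAxis (n : ℕ) : ℕ :=
  Nat.card {p : Fin (n + 1) → ℤ × ℤ //
    IsQuarterWalk stepsS n p ∧ (p (Fin.last n)).2 = 0}

/-- First-step transfer operator on functions on the quarter plane. -/
def stepT {R : Type} [AddMonoid R] (f : ℕ → ℕ → R) : ℕ → ℕ → R := fun i j =>
  f (i + 1) (j + 1) + (if i = 0 then 0 else f (i - 1) (j + 1))
    + (if j = 0 then 0 else f (i + 1) (j - 1))

theorem stepT_apply {R : Type} [AddMonoid R] (f : ℕ → ℕ → R) (i j : ℕ) : stepT f i j =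
  f (i + 1) (j + 1) + (if i = 0 then 0 else f (i - 1) (j + 1))
    + (if j = 0 then 0 else f (i + 1) (j - 1)) := rfl

/-- Walks started at an arbitrary point, ending on the axis. -/
def walksFrom (n : ℕ) (a : ℤ × ℤ) : Set (Fin (n + 1) → ℤ × ℤ) :=
  {p | p 0 = a ∧ (∀ k : Fin n, p k.succ - p k.castSucc ∈ stepsS) ∧
    (∀ k : Fin (n + 1), 0 ≤ (p k).1 ∧ 0 ≤ (p k).2) ∧ (p (Fin.last n)).2 = 0}

theorem walksFrom_empty (n : ℕ) (a : ℤ × ℤ) (h : a.1 < 0 ∨ a.2 < 0) : walksFrom n a = ∅ := by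
  ext p
  simp only [walksFrom, Set.mem_ofPred_eq, Set.mem_empty_iff_false, iff_false]
  rintro ⟨h0, -, h2, -⟩
  have := h2 0
  rw [h0] at this
  omega

theorem walksFrom_succ (n : ℕ) (a : ℤ × ℤ) (h : 0 ≤ a.1 ∧ 0 ≤ a.2) :
    walksFrom (n + 1) a =
      ((fun p => (Fin.cons a p : Fin (n + 2) → ℤ × ℤ)) '' walksFrom n (a + (1, 1)) ∪
       (fun p => (Fin.cons a p : Fin (n + 2) → ℤ × ℤ)) '' walksFrom n (a + (-1, 1))) ∪
       (fun p => (Fin.cons a p : Fin (n + 2) → ℤ × ℤ)) '' walksFrom n (a + (1, -1)) := by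
  have key : ∀ (s : ℤ × ℤ) (q : Fin (n + 1) → ℤ × ℤ), s ∈ stepsS → q ∈ walksFrom n (a + s) →
      (Fin.cons a q : Fin (n + 2) → ℤ × ℤ) ∈ walksFrom (n + 1) a := by
    rintro s q hs ⟨h0, h1, h2, h3⟩
    refine ⟨rfl, ?_, ?_, ?_⟩
    · intro k
      refine Fin.cases ?_ (fun k => ?_) k
      · simpa [h0] using hs
      · rw [← Fin.succ_castSucc, Fin.cons_succ, Fin.cons_succ]
        exact h1 k
    · intro k
      refine Fin.cases ?_ (fun k => ?_) k
      · simpa using h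
      · simpa using h2 k
    · rw [← Fin.succ_last, Fin.cons_succ]; exact h3
  ext p
  constructor
  · rintro ⟨h0, h1, h2, h3⟩
    have hp : (Fin.cons a (fun k => p k.succ) : Fin (n + 2) → ℤ × ℤ) = p := by
      rw [← h0]; exact Fin.cons_self_tail p
    have hm : ∀ s, p 1 - p 0 = s → (fun k => p (Fin.succ k)) ∈ walksFrom n (a + s) := by
      intro s hs
      refine ⟨?_, ?_, fun k => h2 _, ?_⟩
      · rw [← hs, ← h0]; simp
      · intro k
        have := h1 k.succ
        rwa [← Fin.succ_castSucc] at this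
      · rw [← Fin.succ_last] at h3
        exact h3
    have hs := h1 0
    simp only [stepsS, Set.mem_insert_iff, Set.mem_singleton_iff] at hs
    rcases hs with hs | hs | hs
    · exact Or.inl (Or.inl ⟨_, hm _ hs, hp⟩)
    · exact Or.inl (Or.inr ⟨_, hm _ hs, hp⟩)
    · exact Or.inr ⟨_, hm _ hs, hp⟩
  · rintro ((⟨q, hq, rfl⟩ | ⟨q, hq, rfl⟩) | ⟨q, hq, rfl⟩)
    · exact key _ q (by simp [stepsS]) hq
    · exact key _ q (by simp [stepsS]) hq
    · exact key _ q (by simp [stepsS]) hq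

theorem walksFrom_disj (n : ℕ) (a b : ℤ × ℤ) (h : a ≠ b) :
    Disjoint (walksFrom n a) (walksFrom n b) := by
  rw [Set.disjoint_left]
  rintro p ⟨h0, -⟩ ⟨h0', -⟩
  exact h (h0.symm.trans h0')

theorem encard_walksFrom (n : ℕ) : ∀ i j : ℕ, (walksFrom n ((i : ℤ), (j : ℤ))).encard =
    ((stepT^[n] (fun _ j => if j = 0 then 1 else 0) i j : ℕ) : ℕ∞) := by
  induction n with
  | zero =>
    intro i j
    simp only [Function.iterate_zero, id]
    split_ifs with hj
    · subst hj
      have : walksFrom 0 ((i : ℤ), ((0 : ℕ) : ℤ)) = {fun _ => ((i : ℤ), (0 : ℤ))} := by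
        ext p
        simp only [walksFrom, Set.mem_ofPred_eq, Set.mem_singleton_iff]
        constructor
        · rintro ⟨h0, -⟩
          funext k
          have hk : k = 0 := Fin.ext (by simp)
          rw [hk, h0]; simp
        · rintro rfl
          simp
      rw [this]; simp
    · have : walksFrom 0 ((i : ℤ), (j : ℤ)) = ∅ := by
        ext p
        simp only [walksFrom, Set.mem_ofPred_eq, Set.mem_empty_iff_false, iff_false]
        rintro ⟨h0, -, -, h3⟩
        have : Fin.last 0 = 0 := rfl
        rw [this, h0] at h3
        simp at h3
        exact hj h3
      rw [this]; simp
  | succ n ih =>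
    intro i j
    have inj : Function.Injective
        (fun p => (Fin.cons ((i : ℤ), (j : ℤ)) p : Fin (n + 2) → ℤ × ℤ)) :=
      Fin.cons_right_injective (α := fun _ => ℤ × ℤ) _
    rw [walksFrom_succ n _ (by simp), Set.encard_union_eq, Set.encard_union_eq,
      inj.encard_image, inj.encard_image, inj.encard_image, Function.iterate_succ_apply']
    · simp only [stepT_apply]
      push_cast
      congr 1
      · congr 1
        · rw [← ih]; simp
        · split_ifs with hi
          · rw [walksFrom_empty]
            · simp
            · left; simp [hi]
          · rw [← ih]
            have : ((i - 1 : ℕ) : ℤ) = i - 1 := by omega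
            rw [this]; simp [sub_eq_add_neg]
      · split_ifs with hi
        · rw [walksFrom_empty]
          · simp
          · right; simp [hi]
        · rw [← ih]
          have : ((j - 1 : ℕ) : ℤ) = j - 1 := by omega
          rw [this]; simp [sub_eq_add_neg]
    · rw [Set.disjoint_image_iff inj]
      exact walksFrom_disj _ _ _ (by simp)
    · rw [← Set.image_union, Set.disjoint_image_iff inj, Set.disjoint_union_left]
      exact ⟨walksFrom_disj _ _ _ (by simp), walksFrom_disj _ _ _ (by simp)⟩

theorem stepT_cast (n : ℕ) (f : ℕ → ℕ → ℕ) : ∀ i j,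
    ((stepT^[n] f i j : ℕ) : ℝ) = stepT^[n] (fun i j => (f i j : ℝ)) i j := by
  induction n with
  | zero => intro i j; rfl
  | succ n ih =>
    intro i j
    rw [Function.iterate_succ_apply', Function.iterate_succ_apply']
    simp only [stepT_apply]
    push_cast
    simp only [ih]

/-- Section generating polynomial of walks ending on the axis. -/
noncomputable def rr (n : ℕ) (x : ℝ) : ℝ := stepT^[n] (fun i j => if j = 0 then x ^ i else 0) 0 0

/-- Generating polynomial of all walks. -/
noncomputable def qq (n : ℕ) (x y : ℝ) : ℝ := stepT^[n] (fun i j => x ^ i * y ^ j) 0 0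

theorem numWalks_eq (n : ℕ) : (numWalksXAxis n : ℝ) = rr n 1 := by
  have h : numWalksXAxis n = stepT^[n] (fun _ j => if j = 0 then 1 else 0) 0 0 := by
    have h1 := encard_walksFrom n 0 0
    have h2 : numWalksXAxis n = (walksFrom n (0, 0)).ncard := by
      unfold numWalksXAxis
      rw [← Nat.card_coe_set_eq]
      congr! 3 with p
      simp [walksFrom, IsQuarterWalk, and_assoc]
    rw [h2, Set.ncard]
    simp only [Nat.cast_zero] at h1
    rw [h1]; simp
  rw [h, stepT_cast, rr]
  simp

theorem stepT_mono (n : ℕ) : ∀ (f g : ℕ → ℕ → ℝ), (∀ i j, f i j ≤ g i j) →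
    ∀ i j, stepT^[n] f i j ≤ stepT^[n] g i j := by
  induction n with
  | zero => intro f g h; exact h
  | succ n ih =>
    intro f g h
    rw [Function.iterate_succ_apply, Function.iterate_succ_apply]
    apply ih
    intro i j
    simp only [stepT_apply]
    have h1 := h (i+1) (j+1)
    have h2 := h (i-1) (j+1)
    have h3 := h (i+1) (j-1)
    split_ifs <;> linarith

theorem stepT_zero (n : ℕ) : stepT^[n] (fun _ _ => (0 : ℝ)) = fun _ _ => 0 := by
  induction n with
  | zero => rfl
  | succ n ih =>
    rw [Function.iterate_succ_apply', ih]
    funext i j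
    simp [stepT]

theorem stepT_smul (n : ℕ) (c : ℝ) (f : ℕ → ℕ → ℝ) : ∀ i j,
    stepT^[n] (fun i j => c * f i j) i j = c * stepT^[n] f i j := by
  induction n with
  | zero => intro i j; rfl
  | succ n ih =>
    intro i j
    rw [Function.iterate_succ_apply', Function.iterate_succ_apply']
    simp only [stepT_apply, ih]
    split_ifs <;> ring

theorem stepT_add (n : ℕ) (f g : ℕ → ℕ → ℝ) : ∀ i j,
    stepT^[n] (fun i j => f i j + g i j) i j = stepT^[n] f i j + stepT^[n] g i j := by
  induction n with
  | zero => intro i j; rfl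
  | succ n ih =>
    intro i j
    rw [Function.iterate_succ_apply', Function.iterate_succ_apply',
      Function.iterate_succ_apply']
    simp only [stepT_apply, ih]
    split_ifs <;> ring

theorem stepT_swap (n : ℕ) (f : ℕ → ℕ → ℝ) : ∀ i j,
    stepT^[n] (fun i j => f j i) i j = stepT^[n] f j i := by
  induction n with
  | zero => intro i j; rfl
  | succ n ih =>
    intro i j
    rw [Function.iterate_succ_apply', Function.iterate_succ_apply']
    simp only [stepT_apply, ih]
    ring

theorem rr_nonneg (n : ℕ) (x : ℝ) (hx : 0 ≤ x) : 0 ≤ rr n x := by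
  have := stepT_mono n (fun _ _ => 0) (fun i j => if j = 0 then x ^ i else 0)
    (by intro i j; split_ifs <;> positivity) 0 0
  rwa [stepT_zero] at this

theorem rr_le (n : ℕ) (x : ℝ) (hx : 0 ≤ x) (hx1 : x ≤ 1) : rr n x ≤ rr n 1 := by
  apply stepT_mono
  intro i j
  split_ifs
  · rw [one_pow]; exact pow_le_one₀ hx hx1
  · rfl

theorem qq_nonneg (n : ℕ) (x y : ℝ) (hx : 0 ≤ x) (hy : 0 ≤ y) : 0 ≤ qq n x y := by
  have := stepT_mono n (fun _ _ => 0) (fun i j => x ^ i * y ^ j)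
    (by intro i j; positivity) 0 0
  rwa [stepT_zero] at this

theorem qq_bound_aux (n : ℕ) : ∀ i j,
    stepT^[n] (fun i j : ℕ => (1:ℝ) ^ i * (2/3 : ℝ) ^ j) i j ≤ (17/6) ^ n * (2/3 : ℝ) ^ j := by
  induction n with
  | zero => intro i j; simp
  | succ n ih =>
    intro i j
    rw [Function.iterate_succ_apply']
    rw [stepT_apply]
    have h1 := ih (i+1) (j+1)
    have h2 := ih (i-1) (j+1)
    have h3 := ih (i+1) (j-1)
    have hp : (0:ℝ) < (17/6) ^ n * (2/3 : ℝ) ^ j := by positivity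
    have e : (17/6:ℝ) ^ n * (2/3 : ℝ) ^ (j+1) = 2/3 * ((17/6) ^ n * (2/3 : ℝ) ^ j) := by ring
    rw [e] at h1 h2
    have e2 : (17/6:ℝ) ^ (n+1) * (2/3 : ℝ) ^ j = 17/6 * ((17/6) ^ n * (2/3 : ℝ) ^ j) := by ring
    rw [e2]
    have a2 : (if i = 0 then 0 else
        stepT^[n] (fun i j : ℕ => (1:ℝ) ^ i * (2/3 : ℝ) ^ j) (i-1) (j+1)) ≤
        2/3 * ((17/6) ^ n * (2/3 : ℝ) ^ j) := by
      split_ifs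
      · positivity
      · exact h2
    have a3 : (if j = 0 then 0 else
        stepT^[n] (fun i j : ℕ => (1:ℝ) ^ i * (2/3 : ℝ) ^ j) (i+1) (j-1)) ≤
        3/2 * ((17/6) ^ n * (2/3 : ℝ) ^ j) := by
      split_ifs with hj
      · positivity
      · obtain ⟨k, rfl⟩ := Nat.exists_eq_succ_of_ne_zero hj
        refine h3.trans (le_of_eq ?_)
        simp only [Nat.succ_eq_add_one, Nat.add_sub_cancel]
        ring
    linarith

theorem qq_bound (n : ℕ) (x y : ℝ) (hx : 0 ≤ x) (hx1 : x ≤ 1) (hy : 0 ≤ y) (hy1 : y ≤ 2/3) :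
    qq n x y ≤ (17/6) ^ n := by
  have h1 := qq_bound_aux n 0 0
  have h2 : qq n x y ≤ stepT^[n] (fun i j : ℕ => (1:ℝ) ^ i * (2/3 : ℝ) ^ j) 0 0 := by
    apply stepT_mono
    intro i j
    gcongr
  simpa using h2.trans h1

theorem qq_succ (n : ℕ) (t x y : ℝ) (hx : 0 < x) (hy : 0 < y)
    (hk : x * y = t * (x^2*y^2 + x^2 + y^2)) :
    x * y * (t * qq (n+1) x y) = x * y * qq n x y - t * y^2 * rr n y - t * x^2 * rr n x := by
  have hs : rr n y = stepT^[n] (fun i j => if i = 0 then y ^ j else 0) 0 0 :=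
    (stepT_swap n (fun i j => if j = 0 then y ^ i else 0) 0 0).symm
  have hT : (fun i j => (x * y * t) * stepT (fun i j => x ^ i * y ^ j) i j
      + ((t * y^2) * (if i = 0 then y ^ j else 0) + (t * x^2) * (if j = 0 then x ^ i else 0)))
      = fun i j => (x * y) * (x ^ i * y ^ j) := by
    funext i j
    simp only [stepT_apply]
    rcases i with _ | i <;> rcases j with _ | j <;>
      simp only [if_true, Nat.add_sub_cancel, Nat.succ_ne_zero, if_false, pow_succ, pow_zero]
    · linear_combination -hk
    · linear_combination (-(y^j*y)) * hk
    · linear_combination (-(x^i*x)) * hk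
    · linear_combination (-(x^i*x)*(y^j*y)) * hk
  have h := stepT_smul n (x*y) (fun i j => x ^ i * y ^ j) 0 0
  rw [← hT, stepT_add, stepT_add, stepT_smul, stepT_smul, stepT_smul,
    ← Function.iterate_succ_apply stepT, ← hs] at h
  unfold qq rr at *
  linarith

theorem F_hasSum (t x y : ℝ) (ht : 0 < t) (ht3 : t ≤ 1/3) (hx : 0 < x) (hx1 : x ≤ 1)
    (hy : 0 < y) (hy1 : y ≤ 2/3) (hk : x * y = t * (x^2*y^2 + x^2 + y^2)) :
    HasSum (fun n => t * x^2 * (rr n x * t^n) + t * y^2 * (rr n y * t^n)) (x * y) := by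
  have hq : Filter.Tendsto (fun N => t^N * qq N x y) Filter.atTop (nhds 0) := by
    refine squeeze_zero (g := fun N => (17/18 : ℝ)^N)
      (fun N => mul_nonneg (by positivity) (qq_nonneg _ _ _ hx.le hy.le)) (fun N => ?_)
      (tendsto_pow_atTop_nhds_zero_of_lt_one (by norm_num) (by norm_num))
    calc t^N * qq N x y ≤ (1/3)^N * (17/6)^N := by
          gcongr
          · exact qq_nonneg _ _ _ hx.le hy.le
          · exact qq_bound N x y hx.le hx1 hy.le hy1
      _ = (17/18)^N := by rw [← mul_pow]; norm_num
  rw [hasSum_iff_tendsto_nat_of_nonneg]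
  · have hs : ∀ N, ∑ n ∈ Finset.range N, (t * x^2 * (rr n x * t^n) + t * y^2 * (rr n y * t^n))
        = x * y - x * y * (t^N * qq N x y) := by
      intro N
      induction N with
      | zero => simp [qq]
      | succ N ih =>
        rw [Finset.sum_range_succ, ih]
        have := qq_succ N t x y hx hy hk
        rw [pow_succ]
        linear_combination (t^N) * this
    simp only [hs]
    simpa using (hq.const_mul (x*y)).const_sub (x*y)
  · intro n
    have h1 := rr_nonneg n x hx.le
    have h2 := rr_nonneg n y hy.le
    positivity

theorem Y_facts (t : ℝ) (ht : 0 < t) (ht3 : t ≤ 1 / 3) (y : ℝ) (hy : 0 < y) (hy1 : y ≤ 1)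
    (z : ℝ) (hz : z = y * (1 - Real.sqrt (1 - 4 * t ^ 2 * (1 + y ^ 2))) / (2 * t * (1 + y ^ 2))) :
    0 < z ∧ z ≤ y / 2 ∧ y * z = t * (y^2*z^2 + y^2 + z^2) := by
  have hu : 4 * t ^ 2 * (1 + y ^ 2) ≤ 8/9 := by
    have : t^2 ≤ 1/9 := by nlinarith
    have : y^2 ≤ 1 := by nlinarith
    nlinarith [sq_nonneg t, sq_nonneg y]
  set s := Real.sqrt (1 - 4 * t ^ 2 * (1 + y ^ 2)) with hs
  have hs2 : s^2 = 1 - 4 * t ^ 2 * (1 + y ^ 2) := Real.sq_sqrt (by linarith)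
  have hs0 : 0 ≤ s := Real.sqrt_nonneg _
  have hs3 : 1/3 ≤ s := by
    apply Real.le_sqrt_of_sq_le; linarith
  have hz' : z = y * (2 * t) / (1 + s) := by
    rw [hz, div_eq_div_iff (by positivity) (by positivity)]
    linear_combination (-y) * hs2
  refine ⟨by rw [hz']; positivity, ?_, ?_⟩
  · rw [hz', div_le_div_iff₀ (by positivity) (by norm_num)]
    nlinarith
  · have h1 : z * (1 + s) = y * (2 * t) := by rw [hz']; field_simp
    have h2 : z * (2 * t * (1 + y^2)) = y * (1 - s) := by
      rw [hz]; field_simp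
    have h3 : 1 + s ≠ 0 := by positivity
    apply mul_right_cancel₀ h3
    linear_combination (y - t * (1+y^2) * z) * h1 - (y * t) * h2

theorem stmt_5 (t : ℝ) (ht : 0 < t) (ht3 : t ≤ 1 / 3) (Y : ℝ → ℝ)
    (hY : ∀ y, Y y = y * (1 - Real.sqrt (1 - 4 * t ^ 2 * (1 + y ^ 2)))
      / (2 * t * (1 + y ^ 2))) :
    Summable (fun n : ℕ => (numWalksXAxis n : ℝ) * t ^ n) ∧
    Summable (fun n : ℕ => (-1 : ℝ) ^ n * Y^[n] 1 * Y^[n + 1] 1) ∧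
    (∑' n : ℕ, (numWalksXAxis n : ℝ) * t ^ n)
      = (1 / t) * ∑' n : ℕ, (-1 : ℝ) ^ n * Y^[n] 1 * Y^[n + 1] 1 := by
  simp only [numWalks_eq]
  have hF : ∀ y, 0 < y → y ≤ 1 → 0 < Y y ∧ Y y ≤ y / 2 ∧
      y * Y y = t * (y^2*(Y y)^2 + y^2 + (Y y)^2) :=
    fun y h0 h1 => Y_facts t ht ht3 y h0 h1 (Y y) (hY y)
  have hH : ∀ y, 0 < y → y ≤ 1 →
      HasSum (fun n => t * y^2 * (rr n y * t^n) + t * (Y y)^2 * (rr n (Y y) * t^n))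
        (y * Y y) := fun y h0 h1 => by
    obtain ⟨a, b, c⟩ := hF y h0 h1
    exact F_hasSum t y (Y y) ht ht3 h0 h1 a (by linarith) c
  have hS1 : Summable (fun n => rr n 1 * t^n) := by
    have h1 := (hH 1 one_pos le_rfl).summable.mul_left (1/t)
    obtain ⟨a, b, c⟩ := hF 1 one_pos le_rfl
    refine Summable.of_nonneg_of_le (fun n => ?_) (fun n => ?_) h1
    · have := rr_nonneg n 1 zero_le_one
      positivity
    · have h2 := rr_nonneg n (Y 1) a.le
      have h3 : 0 ≤ (Y 1)^2 * (rr n (Y 1) * t^n) := by positivity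
      have : 1 / t * (t * 1^2 * (rr n 1 * t^n) + t * (Y 1)^2 * (rr n (Y 1) * t^n))
        = rr n 1 * t^n + (Y 1)^2 * (rr n (Y 1) * t^n) := by field_simp
      rw [this]; linarith
  have hle : ∀ y, 0 ≤ y → y ≤ 1 → ∀ n, rr n y * t^n ≤ rr n 1 * t^n := fun y h0 h1 n =>
    mul_le_mul_of_nonneg_right (rr_le n y h0 h1) (by positivity)
  have hnn : ∀ y, 0 ≤ y → ∀ n, 0 ≤ rr n y * t^n := fun y h0 n =>
    mul_nonneg (rr_nonneg n y h0) (by positivity)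
  have hS : ∀ y, 0 ≤ y → y ≤ 1 → Summable (fun n => rr n y * t^n) := fun y h0 h1 =>
    Summable.of_nonneg_of_le (hnn y h0) (hle y h0 h1) hS1
  set G : ℝ → ℝ := fun y => ∑' n, rr n y * t^n with hG
  have hfe : ∀ y, 0 < y → y ≤ 1 → t * y^2 * G y + t * (Y y)^2 * G (Y y) = y * Y y := by
    intro y h0 h1
    obtain ⟨a, b, c⟩ := hF y h0 h1
    exact (((hS y h0.le h1).hasSum.mul_left (t*y^2)).add
      ((hS (Y y) a.le (by linarith)).hasSum.mul_left (t*(Y y)^2))).unique (hH y h0 h1)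
  have hy : ∀ n, 0 < Y^[n] 1 ∧ Y^[n] 1 ≤ (1/2)^n := by
    intro n
    induction n with
    | zero => simp
    | succ n ih =>
      have h1 : ((1:ℝ)/2)^n ≤ 1 := pow_le_one₀ (by norm_num) (by norm_num)
      obtain ⟨a, b, c⟩ := hF _ ih.1 (ih.2.trans h1)
      rw [Function.iterate_succ_apply', pow_succ]
      exact ⟨a, by linarith⟩
  have hy1 : ∀ n, Y^[n] 1 ≤ 1 := fun n =>
    (hy n).2.trans (pow_le_one₀ (by norm_num) (by norm_num))
  have hsum : Summable (fun n : ℕ => (-1 : ℝ) ^ n * Y^[n] 1 * Y^[n + 1] 1) := by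
    refine Summable.of_norm_bounded (g := fun n => (1/2 : ℝ)^n)
      (summable_geometric_of_lt_one (by norm_num) (by norm_num)) (fun n => ?_)
    rw [norm_mul, norm_mul, norm_pow, norm_neg, norm_one, one_pow, one_mul,
      Real.norm_of_nonneg (hy n).1.le, Real.norm_of_nonneg (hy (n+1)).1.le]
    exact (mul_le_of_le_one_right (hy n).1.le (hy1 _)).trans (hy n).2
  refine ⟨hS1, hsum, ?_⟩
  have hpart : ∀ N, ∑ n ∈ Finset.range N, (-1 : ℝ) ^ n * Y^[n] 1 * Y^[n + 1] 1
      = t * G 1 - (-1)^N * (t * (Y^[N] 1)^2 * G (Y^[N] 1)) := by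
    intro N
    induction N with
    | zero => simp
    | succ N ih =>
      rw [Finset.sum_range_succ, ih]
      have := hfe _ (hy N).1 (hy1 N)
      rw [Function.iterate_succ_apply', pow_succ]
      linear_combination (-(-1)^N) * this
  have hlim : Filter.Tendsto (fun N => (-1 : ℝ)^N * (t * (Y^[N] 1)^2 * G (Y^[N] 1)))
      Filter.atTop (nhds 0) := by
    have hG0 : ∀ N, 0 ≤ G (Y^[N] 1) := fun N => tsum_nonneg (hnn _ (hy N).1.le)
    have hG1 : ∀ N, G (Y^[N] 1) ≤ G 1 := fun N =>
      (hS _ (hy N).1.le (hy1 N)).tsum_le_tsum (hle _ (hy N).1.le (hy1 N)) hS1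
    refine squeeze_zero_norm (a := fun N => (t * G 1) * (1/2 : ℝ)^N) (fun N => ?_) ?_
    · have h1 := hG0 N
      have h2 := (hy N).1
      have h3 : (Y^[N] 1)^2 ≤ (1/2)^N := by nlinarith [hy1 N, (hy N).2]
      rw [norm_mul, norm_pow, norm_neg, norm_one, one_pow, one_mul,
        Real.norm_of_nonneg (by positivity)]
      calc t * (Y^[N] 1)^2 * G (Y^[N] 1) ≤ t * (1/2)^N * G 1 := by
            gcongr
            exact hG1 N
        _ = _ := by ring
    · simpa using (tendsto_pow_atTop_nhds_zero_of_lt_one (r := (1/2:ℝ))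
        (by norm_num) (by norm_num)).const_mul (t * G 1)
  have ht2 := hsum.hasSum.tendsto_sum_nat
  simp only [hpart] at ht2
  have ht4 := hlim.const_sub (t * G 1)
  rw [tendsto_nhds_unique ht2 ht4]
  simp only [sub_zero]
  field_simp
  rfl
end

section
/- Let S = {(1,1), (−1,1), (1,−1)} ⊂ ℤ². Let cₙ be the number of quarter-plane walks of length n with steps S. Let t be real with 0 < t < 1/3, define Y : ℝ → ℝ by Y(y) = y(1 − √(1 − 4t²(1+y²)))/(2t(1+y²)) and yₙ = Y⁽ⁿ⁾(1). Then the series ∑_{n≥0} cₙ tⁿ and ∑_{n≥0} (−1)ⁿ yₙ y_{n+1} converge, and ∑_{n≥0} cₙ tⁿ = (1 − 2∑_{n≥0} (−1)ⁿ yₙ y_{n+1})/(1 − 3t). -/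
/-- The number of quarter-plane walks of length `n` with steps `S`. -/
noncomputable def numWalks (n : ℕ) : ℕ :=
  Nat.card {p : Fin (n + 1) → ℤ × ℤ // IsQuarterWalk stepsS n p}

/-- Walks of length `n` from `s`. -/
def WalkFrom (n : ℕ) (s : ℤ × ℤ) (p : Fin (n + 1) → ℤ × ℤ) : Prop :=
  p 0 = s ∧
  (∀ k : Fin n, p k.succ - p k.castSucc ∈ stepsS) ∧
  (∀ k : Fin (n + 1), 0 ≤ (p k).1 ∧ 0 ≤ (p k).2)

def stp : Fin 3 → ℤ × ℤ := ![(1, 1), (-1, 1), (1, -1)]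

theorem stp_mem (k : Fin 3) : stp k ∈ stepsS := by
  fin_cases k <;> simp [stp, stepsS]

theorem stp_surj (v : ℤ × ℤ) (h : v ∈ stepsS) : ∃ k, stp k = v := by
  simp only [stepsS, Set.mem_insert_iff, Set.mem_singleton_iff] at h
  rcases h with h | h | h
  · exact ⟨0, by simp [stp, h]⟩
  · exact ⟨1, by simp [stp, h]⟩
  · exact ⟨2, by simp [stp, h]⟩

theorem stp_inj : Function.Injective stp := by
  intro a b h
  fin_cases a <;> fin_cases b <;> simp [stp] at h ⊢

theorem WalkFrom.cons {n : ℕ} {s s' : ℤ × ℤ} {p : Fin (n + 1) → ℤ × ℤ}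
    (hs : 0 ≤ s.1 ∧ 0 ≤ s.2) (hm : s' - s ∈ stepsS) (hp : WalkFrom n s' p) :
    WalkFrom (n + 1) s (Fin.cons s p : Fin (n + 2) → ℤ × ℤ) := by
  obtain ⟨h0, h1, h2⟩ := hp
  refine ⟨rfl, ?_, ?_⟩
  · intro k
    refine Fin.cases ?_ (fun k => ?_) k
    · simpa [h0] using hm
    · simpa [← Fin.succ_castSucc] using h1 k
  · intro k
    refine Fin.cases ?_ (fun k => ?_) k
    · simpa using hs
    · simpa using h2 k

theorem WalkFrom.tail {n : ℕ} {s : ℤ × ℤ} {p : Fin (n + 2) → ℤ × ℤ}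
    (hp : WalkFrom (n + 1) s p) : WalkFrom n (p 1) (Fin.tail p) := by
  obtain ⟨h0, h1, h2⟩ := hp
  refine ⟨rfl, fun k => ?_, fun k => h2 _⟩
  have := h1 k.succ
  simpa [Fin.tail, ← Fin.succ_castSucc] using this

noncomputable def consMap (n : ℕ) (s : ℤ × ℤ) (hs : 0 ≤ s.1 ∧ 0 ≤ s.2) :
    (Σ k : Fin 3, {p : Fin (n + 1) → ℤ × ℤ // WalkFrom n (s + stp k) p}) →
      {p : Fin (n + 2) → ℤ × ℤ // WalkFrom (n + 1) s p} :=
  fun a => ⟨Fin.cons s a.2.1, WalkFrom.cons hs (by simpa using stp_mem a.1) a.2.2⟩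

theorem consMap_bij (n : ℕ) (s : ℤ × ℤ) (hs : 0 ≤ s.1 ∧ 0 ≤ s.2) :
    Function.Bijective (consMap n s hs) := by
  constructor
  · rintro ⟨k, p, hp⟩ ⟨k', p', hp'⟩ h
    have h1 : (Fin.cons s p : Fin (n + 2) → ℤ × ℤ) = Fin.cons s p' := congrArg Subtype.val h
    have h2 : p = p' := Fin.cons_right_injective _ h1
    subst h2
    have h3 : k = k' := stp_inj (add_left_cancel (hp.1.symm.trans hp'.1))
    subst h3
    rfl
  · rintro ⟨p, hp⟩
    have h1 := hp.2.1 0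
    obtain ⟨k, hk⟩ := stp_surj _ h1
    have h2 : s + stp k = p 1 := by
      rw [hk, ← hp.1]; simp
    refine ⟨⟨k, Fin.tail p, by rw [h2]; exact hp.tail⟩, ?_⟩
    apply Subtype.ext
    show Fin.cons s (Fin.tail p) = p
    rw [← hp.1]
    exact Fin.cons_self_tail p

theorem walk_isEmpty (n : ℕ) (s : ℤ × ℤ) (hs : ¬ (0 ≤ s.1 ∧ 0 ≤ s.2)) :
    IsEmpty {p : Fin (n + 1) → ℤ × ℤ // WalkFrom n s p} := by
  constructor
  rintro ⟨p, h0, -, h2⟩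
  exact hs (h0 ▸ h2 0)

theorem walk_finite (n : ℕ) : ∀ s : ℤ × ℤ,
    Finite {p : Fin (n + 1) → ℤ × ℤ // WalkFrom n s p} := by
  induction n with
  | zero =>
    intro s
    have : Subsingleton {p : Fin (0 + 1) → ℤ × ℤ // WalkFrom 0 s p} := by
      constructor
      rintro ⟨p, hp⟩ ⟨q, hq⟩
      apply Subtype.ext
      funext k
      have : k = 0 := Fin.ext (by have := k.isLt; simp)
      subst this
      exact hp.1.trans hq.1.symm
    infer_instance
  | succ n ih =>
    intro s
    by_cases hs : 0 ≤ s.1 ∧ 0 ≤ s.2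
    · have := ih
      exact Finite.of_surjective _ (consMap_bij n s hs).2
    · have := walk_isEmpty (n + 1) s hs
      infer_instance

noncomputable def cnt (n : ℕ) (s : ℤ × ℤ) : ℕ :=
  Nat.card {p : Fin (n + 1) → ℤ × ℤ // WalkFrom n s p}

theorem cnt_neg (n : ℕ) (s : ℤ × ℤ) (hs : ¬ (0 ≤ s.1 ∧ 0 ≤ s.2)) : cnt n s = 0 := by
  have := walk_isEmpty n s hs
  exact Nat.card_of_isEmpty

theorem cnt_zero (s : ℤ × ℤ) (hs : 0 ≤ s.1 ∧ 0 ≤ s.2) : cnt 0 s = 1 := by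
  unfold cnt
  rw [Nat.card_eq_one_iff_unique]
  constructor
  · constructor
    rintro ⟨p, hp⟩ ⟨q, hq⟩
    apply Subtype.ext
    funext k
    have : k = 0 := Fin.ext (by have := k.isLt; simp)
    subst this
    exact hp.1.trans hq.1.symm
  · exact ⟨⟨fun _ => s, rfl, fun k => k.elim0, fun _ => hs⟩⟩

theorem cnt_succ (n : ℕ) (s : ℤ × ℤ) (hs : 0 ≤ s.1 ∧ 0 ≤ s.2) :
    cnt (n + 1) s = cnt n (s + (1, 1)) + cnt n (s + (-1, 1)) + cnt n (s + (1, -1)) := by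
  have := walk_finite n
  unfold cnt
  rw [← Nat.card_eq_of_bijective _ (consMap_bij n s hs), Nat.card_sigma, Fin.sum_univ_three]
  rfl

/-- Admissible successors of a point. -/
def nxt (q : ℕ × ℕ) : Multiset (ℕ × ℕ) :=
  {(q.1 + 1, q.2 + 1)} + (if q.1 = 0 then 0 else {(q.1 - 1, q.2 + 1)}) +
    (if q.2 = 0 then 0 else {(q.1 + 1, q.2 - 1)})

/-- Multiset of endpoints of walks of length `n`. -/
def ends : ℕ → Multiset (ℕ × ℕ)
  | 0 => {(0, 0)}
  | n + 1 => (ends n).bind nxt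

theorem cnt_nxt (n : ℕ) (q : ℕ × ℕ) :
    cnt (n + 1) ((q.1 : ℤ), (q.2 : ℤ)) =
      ((nxt q).map (fun r => cnt n ((r.1 : ℤ), (r.2 : ℤ)))).sum := by
  obtain ⟨i, j⟩ := q
  rw [cnt_succ _ _ (by simp)]
  rcases i with _ | i <;> rcases j with _ | j <;> simp [nxt]
  · rw [cnt_neg n (-1, 1) (by simp), cnt_neg n (1, -1) (by simp)]
    simp
  · rw [cnt_neg n (-1, _) (by simp)]
  · rw [cnt_neg n (_, -1) (by simp)]
  · ring

theorem sum_bind_nxt {R : Type*} [AddCommMonoid R] (M : Multiset (ℕ × ℕ)) (f : ℕ × ℕ → R) :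
    ((M.bind nxt).map f).sum = (M.map (fun q => ((nxt q).map f).sum)).sum := by
  rw [Multiset.map_bind, Multiset.sum_bind]

theorem cnt_ends (m : ℕ) : ∀ n, cnt (n + m) (0, 0) =
    ((ends m).map (fun r => cnt n ((r.1 : ℤ), (r.2 : ℤ)))).sum := by
  induction m with
  | zero => intro n; simp [ends]
  | succ m ih =>
    intro n
    rw [ends, sum_bind_nxt, show n + (m + 1) = (n + 1) + m by ring, ih]
    simp only [cnt_nxt]

theorem numWalks_eq_s6 (n : ℕ) : numWalks n = (ends n).card := by
  have h : numWalks n = cnt n (0, 0) := rfl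
  have h2 := cnt_ends n 0
  rw [Nat.zero_add] at h2
  rw [h, h2]
  have : (fun r : ℕ × ℕ => cnt 0 ((r.1 : ℤ), (r.2 : ℤ))) = fun _ => 1 := by
    funext r
    exact cnt_zero _ (by simp)
  rw [this]
  simp

/-- Endpoint polynomial. -/
noncomputable def P (n : ℕ) (x y : ℝ) : ℝ :=
  ((ends n).map (fun q => x ^ q.1 * y ^ q.2)).sum

theorem nxt_sum (x y : ℝ) (q : ℕ × ℕ) :
    x * y * ((nxt q).map (fun q => x ^ q.1 * y ^ q.2)).sum =
      (x ^ 2 * y ^ 2 + x ^ 2 + y ^ 2) * (x ^ q.1 * y ^ q.2)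
        - x ^ 2 * (x ^ q.1 * 0 ^ q.2) - y ^ 2 * (0 ^ q.1 * y ^ q.2) := by
  obtain ⟨i, j⟩ := q
  rcases i with _ | i <;> rcases j with _ | j <;> simp [nxt] <;> ring

theorem P_succ (n : ℕ) (x y : ℝ) :
    x * y * P (n + 1) x y = (x ^ 2 * y ^ 2 + x ^ 2 + y ^ 2) * P n x y
      - x ^ 2 * P n x 0 - y ^ 2 * P n 0 y := by
  unfold P
  rw [ends, sum_bind_nxt]
  induction ends n using Multiset.induction_on with
  | empty => simp
  | cons a s ih =>
    simp only [Multiset.map_cons, Multiset.sum_cons]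
    linear_combination ih + nxt_sum x y a

theorem nxt_swap (q : ℕ × ℕ) : (nxt q).map Prod.swap = nxt q.swap := by
  obtain ⟨i, j⟩ := q
  rcases i with _ | i <;> rcases j with _ | j <;> simp [nxt]
  exact Multiset.cons_swap _ _ _

theorem ends_swap (n : ℕ) : (ends n).map Prod.swap = ends n := by
  induction n with
  | zero => simp [ends]
  | succ n ih =>
    rw [ends, Multiset.map_bind]
    conv_rhs => rw [← ih]
    rw [Multiset.bind_map]
    simp only [nxt_swap]

theorem P_symm (n : ℕ) (x y : ℝ) : P n x y = P n y x := by
  unfold P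
  conv_lhs => rw [← ends_swap n]
  rw [Multiset.map_map]
  congr 2
  funext q
  simp [mul_comm]

theorem P_nonneg (n : ℕ) {x y : ℝ} (hx : 0 ≤ x) (hy : 0 ≤ y) : 0 ≤ P n x y := by
  unfold P
  apply Multiset.sum_nonneg
  intro a ha
  obtain ⟨q, -, rfl⟩ := Multiset.mem_map.1 ha
  positivity

theorem P_one (n : ℕ) : P n 1 1 = (ends n).card := by
  simp [P]

theorem card_ends (n : ℕ) : (ends n).card ≤ 3 ^ n := by
  induction n with
  | zero => simp [ends]
  | succ n ih =>
    rw [ends, Multiset.card_bind]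
    have : ((ends n).map (Multiset.card ∘ nxt)).sum ≤ (ends n).card • 3 := by
      have := Multiset.sum_le_card_nsmul ((ends n).map (Multiset.card ∘ nxt)) 3 ?_
      · simpa using this
      · intro a ha
        obtain ⟨q, -, rfl⟩ := Multiset.mem_map.1 ha
        simp only [nxt, Function.comp]
        split_ifs <;> simp
    rw [smul_eq_mul] at this
    rw [pow_succ]
    omega

theorem P_le (n : ℕ) {x y : ℝ} (hx : 0 ≤ x) (hy : 0 ≤ y) (hx1 : x ≤ 1) (hy1 : y ≤ 1) :
    P n x y ≤ 3 ^ n := by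
  calc P n x y ≤ (ends n).card := by
        have := Multiset.sum_le_card_nsmul ((ends n).map (fun q => x ^ q.1 * y ^ q.2)) 1 ?_
        · simpa [P] using this
        · intro a ha
          obtain ⟨q, -, rfl⟩ := Multiset.mem_map.1 ha
          exact mul_le_one₀ (pow_le_one₀ hx hx1) (by positivity) (pow_le_one₀ hy hy1)
    _ ≤ 3 ^ n := by exact_mod_cast card_ends n

theorem P_summable {t x y : ℝ} (ht : 0 < t) (ht3 : t < 1 / 3)
    (hx : 0 ≤ x) (hy : 0 ≤ y) (hx1 : x ≤ 1) (hy1 : y ≤ 1) :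
    Summable (fun n => P n x y * t ^ n) := by
  have h : Summable (fun n : ℕ => (3 * t) ^ n) :=
    summable_geometric_of_lt_one (by positivity) (by linarith)
  refine Summable.of_nonneg_of_le (fun n => ?_) (fun n => ?_) h
  · have := P_nonneg n hx hy
    positivity
  · rw [mul_pow]
    exact mul_le_mul_of_nonneg_right (P_le n hx hy hx1 hy1) (by positivity)

/-- The generating function. -/
noncomputable def G (t x y : ℝ) : ℝ := ∑' n, P n x y * t ^ n

theorem G_symm (t x y : ℝ) : G t x y = G t y x := by
  unfold G
  simp only [P_symm _ x y]

theorem G_nonneg {t x y : ℝ} (ht : 0 < t) (hx : 0 ≤ x) (hy : 0 ≤ y) : 0 ≤ G t x y :=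
  tsum_nonneg fun n => mul_nonneg (P_nonneg n hx hy) (by positivity)

theorem G_le {t x y : ℝ} (ht : 0 < t) (ht3 : t < 1 / 3)
    (hx : 0 ≤ x) (hy : 0 ≤ y) (hx1 : x ≤ 1) (hy1 : y ≤ 1) : G t x y ≤ (1 - 3 * t)⁻¹ := by
  have h : Summable (fun n : ℕ => (3 * t) ^ n) :=
    summable_geometric_of_lt_one (by positivity) (by linarith)
  rw [← tsum_geometric_of_lt_one (r := 3 * t) (by positivity) (by linarith)]
  refine Summable.tsum_le_tsum (fun n => ?_) (P_summable ht ht3 hx hy hx1 hy1) h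
  rw [mul_pow]
  exact mul_le_mul_of_nonneg_right (P_le n hx hy hx1 hy1) (by positivity)

theorem G_eq {t x y : ℝ} (ht : 0 < t) (ht3 : t < 1 / 3)
    (hx : 0 ≤ x) (hy : 0 ≤ y) (hx1 : x ≤ 1) (hy1 : y ≤ 1) :
    (x * y - t * (x ^ 2 * y ^ 2 + x ^ 2 + y ^ 2)) * G t x y =
      x * y - t * x ^ 2 * G t x 0 - t * y ^ 2 * G t y 0 := by
  have s := P_summable ht ht3 hx hy hx1 hy1
  have s1 := P_summable ht ht3 hx le_rfl hx1 zero_le_one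
  have s2 := P_summable ht ht3 le_rfl hy zero_le_one hy1
  have e0 : G t x y = 1 + ∑' n, P (n + 1) x y * t ^ (n + 1) := by
    unfold G
    rw [s.tsum_eq_zero_add]
    simp [P, ends]
  have e1 : x * y * ∑' n, P (n + 1) x y * t ^ (n + 1) =
      t * (x ^ 2 * y ^ 2 + x ^ 2 + y ^ 2) * G t x y - t * x ^ 2 * G t x 0
        - t * y ^ 2 * G t 0 y := by
    unfold G
    rw [← tsum_mul_left, ← tsum_mul_left, ← tsum_mul_left, ← tsum_mul_left,
      ← Summable.tsum_sub (s.mul_left _) (s1.mul_left _),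
      ← Summable.tsum_sub ((s.mul_left _).sub (s1.mul_left _)) (s2.mul_left _)]
    congr 1
    funext n
    have := P_succ n x y
    rw [pow_succ]
    linear_combination (t ^ n * t) * this
  rw [G_symm t y 0]
  linear_combination (x * y) * e0 + e1

theorem Y_props {t y : ℝ} (ht : 0 < t) (ht3 : t < 1 / 3) (hy : 0 ≤ y) (hy1 : y ≤ 1) (z : ℝ)
    (hz : z = y * (1 - Real.sqrt (1 - 4 * t ^ 2 * (1 + y ^ 2))) / (2 * t * (1 + y ^ 2))) :
    0 ≤ z ∧ z ≤ 2 * t * y ∧ y * z - t * (y ^ 2 * z ^ 2 + y ^ 2 + z ^ 2) = 0 := by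
  have hD : 0 < 1 + y ^ 2 := by positivity
  have hD2 : 1 + y ^ 2 ≤ 2 := by nlinarith
  have ht2 : t ^ 2 ≤ 1 / 9 := by nlinarith
  have hn : 0 ≤ 1 - 4 * t ^ 2 * (1 + y ^ 2) := by nlinarith [sq_nonneg t]
  have hs2 := Real.sq_sqrt hn
  have hs0 := Real.sqrt_nonneg (1 - 4 * t ^ 2 * (1 + y ^ 2))
  set s := Real.sqrt (1 - 4 * t ^ 2 * (1 + y ^ 2)) with hs
  have hs1 : s ≤ 1 := by
    have : 0 ≤ 4 * t ^ 2 * (1 + y ^ 2) := by positivity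
    nlinarith
  have h1 : 1 - s ≤ 4 * t ^ 2 * (1 + y ^ 2) := by nlinarith
  refine ⟨?_, ?_, ?_⟩
  · rw [hz]
    exact div_nonneg (mul_nonneg hy (by linarith)) (by positivity)
  · rw [hz, div_le_iff₀ (by positivity)]
    nlinarith [mul_le_mul_of_nonneg_left h1 hy]
  · rw [hz]
    field_simp
    linear_combination (-(y ^ 2 + y ^ 4)) * hs2

theorem stmt_6 (t : ℝ) (ht : 0 < t) (ht3 : t < 1 / 3) (Y : ℝ → ℝ)
    (hY : ∀ y, Y y = y * (1 - Real.sqrt (1 - 4 * t ^ 2 * (1 + y ^ 2)))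
      / (2 * t * (1 + y ^ 2))) :
    Summable (fun n : ℕ => (numWalks n : ℝ) * t ^ n) ∧
    Summable (fun n : ℕ => (-1 : ℝ) ^ n * Y^[n] 1 * Y^[n + 1] 1) ∧
    (∑' n : ℕ, (numWalks n : ℝ) * t ^ n)
      = (1 - 2 * ∑' n : ℕ, (-1 : ℝ) ^ n * Y^[n] 1 * Y^[n + 1] 1) / (1 - 3 * t) := by
  have hc : ∀ n : ℕ, (numWalks n : ℝ) = P n 1 1 := fun n => by rw [P_one, numWalks_eq_s6]
  simp only [hc]
  have hyn : ∀ n : ℕ, 0 ≤ Y^[n] 1 ∧ Y^[n] 1 ≤ (2 * t) ^ n := by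
    intro n
    induction n with
    | zero => simp
    | succ n ih =>
      rw [Function.iterate_succ_apply']
      have h1 : Y^[n] 1 ≤ 1 := ih.2.trans (pow_le_one₀ (by positivity) (by linarith))
      obtain ⟨a, b, -⟩ := Y_props ht ht3 ih.1 h1 _ (hY _)
      refine ⟨a, b.trans ?_⟩
      rw [pow_succ, mul_comm _ (2 * t)]
      exact mul_le_mul_of_nonneg_left ih.2 (by positivity)
  have hy1 : ∀ n : ℕ, Y^[n] 1 ≤ 1 := fun n =>
    (hyn n).2.trans (pow_le_one₀ (by positivity) (by linarith))
  have hgeo : Summable (fun n : ℕ => (2 * t) ^ n) :=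
    summable_geometric_of_lt_one (by positivity) (by linarith)
  have hsum : Summable (fun n : ℕ => (-1 : ℝ) ^ n * Y^[n] 1 * Y^[n + 1] 1) := by
    refine Summable.of_norm_bounded hgeo (fun n => ?_)
    rw [Real.norm_eq_abs, abs_mul, abs_mul, abs_pow, abs_neg, abs_one, one_pow, one_mul,
      abs_of_nonneg (hyn n).1, abs_of_nonneg (hyn (n + 1)).1]
    exact (mul_le_of_le_one_right (hyn n).1 (hy1 _)).trans (hyn n).2
  refine ⟨P_summable ht ht3 zero_le_one zero_le_one le_rfl le_rfl, hsum, ?_⟩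
  have hstep : ∀ n : ℕ, Y^[n] 1 * Y^[n + 1] 1 =
      t * (Y^[n] 1) ^ 2 * G t (Y^[n] 1) 0 + t * (Y^[n + 1] 1) ^ 2 * G t (Y^[n + 1] 1) 0 := by
    intro n
    have h := G_eq ht ht3 (hyn n).1 (hyn (n + 1)).1 (hy1 n) (hy1 (n + 1))
    have hk := (Y_props ht ht3 (hyn n).1 (hy1 n) _ (hY _)).2.2
    rw [← Function.iterate_succ_apply' Y n 1] at hk
    rw [hk] at h
    linarith
  have hpart : ∀ n : ℕ, ∑ k ∈ Finset.range n, (-1 : ℝ) ^ k * Y^[k] 1 * Y^[k + 1] 1 =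
      t * G t 1 0 - (-1) ^ n * (t * (Y^[n] 1) ^ 2 * G t (Y^[n] 1) 0) := by
    intro n
    induction n with
    | zero => simp
    | succ n ih =>
      rw [Finset.sum_range_succ, ih, pow_succ]
      linear_combination (-1) ^ n * hstep n
  have hlim0 : Filter.Tendsto
      (fun n : ℕ => (-1 : ℝ) ^ n * (t * (Y^[n] 1) ^ 2 * G t (Y^[n] 1) 0)) Filter.atTop
      (nhds 0) := by
    have hb : Filter.Tendsto (fun n : ℕ => (2 * t) ^ n * (t * (1 - 3 * t)⁻¹)) Filter.atTop
        (nhds 0) := by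
      simpa using hgeo.tendsto_atTop_zero.mul_const (t * (1 - 3 * t)⁻¹)
    refine squeeze_zero_norm (fun n => ?_) hb
    have g0 := G_nonneg ht (hyn n).1 le_rfl
    have g1 := G_le ht ht3 (hyn n).1 le_rfl (hy1 n) zero_le_one
    have hp : 0 ≤ t * (Y^[n] 1) ^ 2 * G t (Y^[n] 1) 0 := by positivity
    rw [Real.norm_eq_abs, abs_mul, abs_pow, abs_neg, abs_one, one_pow, one_mul, abs_of_nonneg hp]
    have hsq : (Y^[n] 1) ^ 2 ≤ (2 * t) ^ n := by
      have := (hyn n).2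
      have := (hyn n).1
      have := hy1 n
      nlinarith
    calc t * (Y^[n] 1) ^ 2 * G t (Y^[n] 1) 0 = (Y^[n] 1) ^ 2 * (t * G t (Y^[n] 1) 0) := by ring
      _ ≤ (2 * t) ^ n * (t * (1 - 3 * t)⁻¹) := by gcongr
  have hlim := hsum.hasSum.tendsto_sum_nat
  simp only [hpart] at hlim
  have heq := tendsto_nhds_unique hlim (hlim0.const_sub (t * G t 1 0))
  rw [sub_zero] at heq
  have hG := G_eq (x := 1) (y := 1) ht ht3 zero_le_one zero_le_one le_rfl le_rfl
  have h3 : (1 - 3 * t) ≠ 0 := by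
    have : 0 < 1 - 3 * t := by linarith
    exact this.ne'
  rw [heq, eq_div_iff h3]
  change G t 1 1 * _ = _
  linear_combination hG
end

section
/- Let q ∈ ℂ with q ≠ 0 and q² ≠ 1, let s ∈ ℂ satisfy s² = 1 − 6q² + q⁴, set β = (1 + q² + s)/(2q), and let b : ℕ → ℂ satisfy b₀ = 1, b₁ = β, and b_{n+2} = ((1+q²)/q)·b_{n+1} − b_n for all n ≥ 0. If b_n = 0 for some n ≥ 1, then q^{2n} + q^{−2n} + q² + q^{−2} = 4. -/
theorem stmt_11 (q s : ℂ) (hq : q ≠ 0) (hq2 : q ^ 2 ≠ 1)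
    (hs : s ^ 2 = 1 - 6 * q ^ 2 + q ^ 4) (b : ℕ → ℂ)
    (hb0 : b 0 = 1) (hb1 : b 1 = (1 + q ^ 2 + s) / (2 * q))
    (hrec : ∀ n : ℕ, b (n + 2) = ((1 + q ^ 2) / q) * b (n + 1) - b n)
    (n : ℕ) (hn : 1 ≤ n) (hbn : b n = 0) :
    q ^ (2 * (n : ℤ)) + q ^ (-(2 * (n : ℤ))) + q ^ (2 : ℤ) + q ^ (-2 : ℤ) = 4 := by
  have key : ∀ m : ℕ,
      2 * (q ^ 2 - 1) * q ^ m * b m = (q ^ 2 - 1 + s) * (q ^ m) ^ 2 + (q ^ 2 - 1 - s) ∧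
      2 * (q ^ 2 - 1) * q ^ (m + 1) * b (m + 1)
        = (q ^ 2 - 1 + s) * (q ^ (m + 1)) ^ 2 + (q ^ 2 - 1 - s) := by
    intro m
    induction m with
    | zero =>
      refine ⟨by rw [hb0]; ring, ?_⟩
      simp only [zero_add, hb1]
      field_simp
      ring
    | succ k ih =>
      obtain ⟨h0, h1⟩ := ih
      refine ⟨h1, ?_⟩
      have h2 : q ^ (k + 2) * b (k + 2)
          = (1 + q ^ 2) * (q ^ (k + 1) * b (k + 1)) - q ^ 2 * (q ^ k * b k) := by
        rw [hrec k]
        field_simp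
        ring
      show 2 * (q ^ 2 - 1) * q ^ (k + 2) * b (k + 2)
        = (q ^ 2 - 1 + s) * (q ^ (k + 2)) ^ 2 + (q ^ 2 - 1 - s)
      have e1 : q ^ (k + 1) = q ^ k * q := pow_succ q k
      have e2 : q ^ (k + 2) = q ^ k * q ^ 2 := pow_add q k 2
      rw [e1] at h1 h2
      rw [e2] at h2 ⊢
      linear_combination 2 * (q ^ 2 - 1) * h2 + (1 + q ^ 2) * h1 - q ^ 2 * h0
  have h := (key n).1
  rw [hbn, mul_zero] at h
  have hx : q ^ n ≠ 0 := pow_ne_zero n hq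
  have e : q ^ (2 * (n : ℤ)) = (q ^ n) ^ 2 := by
    rw [mul_comm, zpow_mul]; norm_cast
  have e3 : q ^ (2 : ℤ) = q ^ 2 := by norm_cast
  rw [zpow_neg, zpow_neg, e, e3]
  generalize q ^ n = x at h hx
  field_simp
  linear_combination (-1 / 4 : ℂ) * ((q ^ 2 - 1) * (x ^ 2 + 1) - s * (x ^ 2 - 1)) * h
    + (1 / 4 : ℂ) * (x ^ 2 - 1) ^ 2 * hs
end

section
/- Let q ∈ ℂ with q ≠ 0 and q² ≠ 1, let s ∈ ℂ satisfy s² = 1 − 6q² + q⁴, set β = (1 + q² + s)/(2q), and let b : ℕ → ℂ satisfy b₀ = 1, b₁ = β, and b_{n+2} = ((1+q²)/q)·b_{n+1} − b_n for all n ≥ 0. If b_n = 0 and b_k = 0 for integers n, k ≥ 1, then n = k. In other words, a nonzero complex number q (with q² ≠ 1) is a zero of at most one member of the family (b_n). -/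
theorem stmt14_closed (q s : ℂ) (hq : q ≠ 0) (b : ℕ → ℂ)
    (hb0 : b 0 = 1) (hb1 : b 1 = (1 + q ^ 2 + s) / (2 * q))
    (hrec : ∀ n : ℕ, b (n + 2) = ((1 + q ^ 2) / q) * b (n + 1) - b n) (n : ℕ) :
    2 * b n * (q ^ 2 - 1) * q ^ n = (q ^ 2 - 1 + s) * (q ^ 2) ^ n + (q ^ 2 - 1 - s) := by
  induction n using Nat.twoStepInduction with
  | zero => rw [hb0]; ring
  | one => rw [hb1]; field_simp; ring
  | more n h1 h2 =>
    have h3 : b (n + 2) * q = (1 + q ^ 2) * b (n + 1) - q * b n := by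
      rw [hrec]; field_simp
    linear_combination (2 * (q ^ 2 - 1) * q ^ n * q) * h3 + (1 + q ^ 2) * h2 - q ^ 2 * h1

theorem stmt14_real (a b x y : ℝ) (h1 : a ^ 2 + b ^ 2 = 1)
    (e1 : x ^ 2 - y ^ 2 = (a - 1) ^ 2 - b ^ 2 - 4 * a)
    (e2 : x * y = (a - 1) * b - 2 * b)
    (e3 : (a - 1) * x + b * y = 0) : a = 1 := by
  have h : (b * x - (a - 1) * y) ^ 2 + (2 - 2 * a) ^ 2 + 8 * (1 - a) = 0 := by
    have f1 : (b * x - (a - 1) * y) ^ 2 + ((a - 1) ^ 2 + b ^ 2) ^ 2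
        - 4 * (a * ((a - 1) ^ 2 - b ^ 2) + b * (2 * (a - 1) * b)) = 0 := by
      linear_combination ((a - 1) * x + b * y) * e3 - ((a - 1) ^ 2 - b ^ 2) * e1
        - 4 * (a - 1) * b * e2
    have f2 : (a - 1) ^ 2 + b ^ 2 = 2 - 2 * a := by linear_combination h1
    rw [f2] at f1
    linear_combination f1 + 4 * (a - 2) * h1
  nlinarith [sq_nonneg (b * x - (a - 1) * y), sq_nonneg (2 - 2 * a), sq_nonneg b]

theorem stmt_14 (q s : ℂ) (hq : q ≠ 0) (hq2 : q ^ 2 ≠ 1)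
    (hs : s ^ 2 = 1 - 6 * q ^ 2 + q ^ 4) (b : ℕ → ℂ)
    (hb0 : b 0 = 1) (hb1 : b 1 = (1 + q ^ 2 + s) / (2 * q))
    (hrec : ∀ n : ℕ, b (n + 2) = ((1 + q ^ 2) / q) * b (n + 1) - b n)
    (n k : ℕ) (hn : 1 ≤ n) (hk : 1 ≤ k)
    (hbn : b n = 0) (hbk : b k = 0) :
    n = k := by
  have hcn := stmt14_closed q s hq b hb0 hb1 hrec n
  have hck := stmt14_closed q s hq b hb0 hb1 hrec k
  rw [hbn] at hcn
  rw [hbk] at hck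
  have hs' : s ^ 2 = (q ^ 2 - 1) ^ 2 - 4 * q ^ 2 := by rw [hs]; ring
  have hQ0 : q ^ 2 ≠ 0 := pow_ne_zero _ hq
  generalize q ^ 2 = Q at *
  by_contra hne
  have hus : Q - 1 + s ≠ 0 := by
    intro h
    rw [h] at hcn
    apply hq2
    linear_combination (h - hcn) / 2
  have hpow : Q ^ n = Q ^ k := by
    apply mul_left_cancel₀ hus
    linear_combination hck - hcn
  have hnorm : ‖Q‖ = 1 := by
    by_contra h1
    have h2 : ‖Q‖ ^ n = ‖Q‖ ^ k := by rw [← norm_pow, ← norm_pow, hpow]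
    exact hne (pow_right_injective₀ (norm_pos_iff.mpr hQ0) h1 h2)
  have hn2 : ‖Q - 1 + s‖ = ‖Q - 1 - s‖ := by
    have h : Q - 1 - s = -((Q - 1 + s) * Q ^ n) := by linear_combination -hcn
    rw [h, norm_neg, norm_mul, norm_pow, hnorm]; simp
  have e3 : (Q.re - 1) * s.re + Q.im * s.im = 0 := by
    have h : Complex.normSq (Q - 1 + s) = Complex.normSq (Q - 1 - s) := by
      rw [Complex.normSq_eq_norm_sq, Complex.normSq_eq_norm_sq, hn2]
    simp [Complex.normSq_apply] at h
    linear_combination h / 4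
  have h1 : Q.re ^ 2 + Q.im ^ 2 = 1 := by
    have h := Complex.normSq_eq_norm_sq Q
    rw [hnorm, Complex.normSq_apply] at h
    linear_combination h
  have er := congrArg Complex.re hs'
  have ei := congrArg Complex.im hs'
  simp [pow_two] at er ei
  have ha : Q.re = 1 := stmt14_real Q.re Q.im s.re s.im h1
    (by linear_combination er) (by linear_combination ei / 2) e3
  apply hq2
  apply Complex.ext
  · simpa using ha
  · rw [ha] at h1
    simpa using h1
end

section
/- Let T = {(−1,1), (0,1), (1,−1)} ⊂ ℤ². Let cₙ be the number of quarter-plane walks of length n with steps T. Let t be real with 0 < t < 1/3, and define X₊(u) = u((1−tu) − √((1−tu)² − 4t²))/(2t) and Y₊(u) = u(1 − √(1 − 4t²(1+u)))/(2t(1+u)). Define sequences A and B by A₀ = 1, A_{2k+1} = Y₊(A_{2k}), A_{2k+2} = X₊(A_{2k+1}), and B₀ = 1, B_{2k+1} = X₊(B_{2k}), B_{2k+2} = Y₊(B_{2k+1}). Then the series ∑_{n≥0} cₙ tⁿ, ∑_{n≥0} (−1)ⁿ AₙA_{n+1} and ∑_{n≥0} (−1)ⁿ BₙB_{n+1} converge,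 and ∑_{n≥0} cₙ tⁿ = (1 − ∑_{n≥0} (−1)ⁿ AₙA_{n+1} − ∑_{n≥0} (−1)ⁿ BₙB_{n+1})/(1 − 3t). -/
/-- The step set T = {(−1,1), (0,1), (1,−1)}. -/
def stepsT : Set (ℤ × ℤ) := {(-1, 1), (0, 1), (1, -1)}

/-- The number of quarter-plane walks of length `n` with steps `T`. -/
noncomputable def numWalksT (n : ℕ) : ℕ :=
  Nat.card {p : Fin (n + 1) → ℤ × ℤ // IsQuarterWalk stepsT n p}

abbrev WalkT (n : ℕ) := {p : Fin (n + 1) → ℤ × ℤ // IsQuarterWalk stepsT n p}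

def nextT (v : ℤ × ℤ) : Finset (ℤ × ℤ) :=
  ({v + (-1, 1), v + (0, 1), v + (1, -1)} : Finset (ℤ × ℤ)).filter (fun q => 0 ≤ q.1 ∧ 0 ≤ q.2)

theorem mem_nextT (v q : ℤ × ℤ) : q ∈ nextT v ↔ (q - v ∈ stepsT ∧ (0 ≤ q.1 ∧ 0 ≤ q.2)) := by
  have h (s : ℤ × ℤ) : q - v = s ↔ q = v + s := by rw [sub_eq_iff_eq_add, add_comm]
  simp [nextT, stepsT, h]

def walkEquiv (n : ℕ) : WalkT (n + 1) ≃ (Σ p : WalkT n, {q // q ∈ nextT (p.1 (Fin.last n))}) where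
  toFun p := ⟨⟨fun k => p.1 k.castSucc, by
      obtain ⟨p, h0, h1, h2⟩ := p
      refine ⟨h0, fun k => ?_, fun k => h2 _⟩
      exact h1 k.castSucc⟩,
    ⟨p.1 (Fin.last (n + 1)), by
      obtain ⟨p, h0, h1, h2⟩ := p
      rw [mem_nextT]
      exact ⟨h1 (Fin.last n), h2 _⟩⟩⟩
  invFun x := ⟨Fin.snoc (α := fun _ => ℤ × ℤ) x.1.1 x.2.1, by
      obtain ⟨⟨p, h0, h1, h2⟩, ⟨q, hq⟩⟩ := x
      rw [mem_nextT] at hq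
      refine ⟨?_, fun k => ?_, fun k => ?_⟩
      · have : (0 : Fin (n + 1 + 1)) = Fin.castSucc 0 := rfl
        rw [this, Fin.snoc_castSucc]; exact h0
      · refine Fin.lastCases ?_ (fun k => ?_) k
        · rw [Fin.succ_last, Fin.snoc_last, Fin.snoc_castSucc]; exact hq.1
        · rw [Fin.succ_castSucc, Fin.snoc_castSucc, Fin.snoc_castSucc]; exact h1 k
      · refine Fin.lastCases ?_ (fun k => ?_) k
        · rw [Fin.snoc_last]; exact hq.2
        · rw [Fin.snoc_castSucc]; exact h2 k⟩
  left_inv p := by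
    apply Subtype.ext
    funext k
    refine Fin.lastCases ?_ (fun k => ?_) k
    · simp
    · simp
  right_inv x := by
    obtain ⟨⟨p, hp⟩, ⟨q, hq⟩⟩ := x
    have h1 : (fun k : Fin (n + 1) => (Fin.snoc (α := fun _ => ℤ × ℤ) p q) k.castSucc) = p := by
      funext k; simp
    have h2 : (Fin.snoc (α := fun _ => ℤ × ℤ) p q) (Fin.last (n + 1)) = q := by simp
    refine Sigma.ext (Subtype.ext h1) ?_
    rw [Subtype.heq_iff_coe_eq]
    · exact h2
    · intro y
      simp

instance walkT_zero_unique : Unique (WalkT 0) where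
  default := ⟨fun _ => (0, 0), rfl, fun k => k.elim0, fun _ => ⟨le_rfl, le_rfl⟩⟩
  uniq p := by
    apply Subtype.ext
    funext k
    have hk : k = 0 := Fin.fin_one_eq_zero k
    subst hk
    exact p.2.1

instance walkT_finite (n : ℕ) : Finite (WalkT n) := by
  induction n with
  | zero => infer_instance
  | succ n ih => exact Finite.of_equiv _ (walkEquiv n).symm

noncomputable instance walkT_fintype (n : ℕ) : Fintype (WalkT n) := Fintype.ofFinite _

noncomputable def mono (x y : ℝ) (v : ℤ × ℤ) : ℝ := x ^ v.1.toNat * y ^ v.2.toNat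

noncomputable def PP (n : ℕ) (x y : ℝ) : ℝ := ∑ p : WalkT n, mono x y (p.1 (Fin.last n))

theorem PP_zero (x y : ℝ) : PP 0 x y = 1 := by
  unfold PP
  rw [Fintype.sum_unique]
  have : (default : WalkT 0).1 (Fin.last 0) = (0, 0) := rfl
  rw [this]; simp [mono]

theorem PP_one (n : ℕ) : PP n 1 1 = numWalksT n := by
  unfold PP numWalksT
  rw [Nat.card_eq_fintype_card]
  simp [mono]

theorem PP_succ' (n : ℕ) (x y : ℝ) :
    PP (n + 1) x y = ∑ p : WalkT n, ∑ q ∈ nextT (p.1 (Fin.last n)), mono x y q := by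
  unfold PP
  rw [← (walkEquiv n).symm.sum_comp, Fintype.sum_sigma]
  refine Finset.sum_congr rfl fun p _ => ?_
  rw [← Finset.sum_coe_sort (nextT (p.1 (Fin.last n))) (mono x y)]
  refine Finset.sum_congr rfl fun q _ => ?_
  simp [walkEquiv]

theorem next_sum (x y : ℝ) (v : ℤ × ℤ) (h1 : 0 ≤ v.1) (h2 : 0 ≤ v.2) :
    x * y * ∑ q ∈ nextT v, mono x y q = (y ^ 2 + x * y ^ 2 + x ^ 2) * mono x y v
      - y ^ 2 * mono 0 y v - x ^ 2 * mono x 0 v := by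
  obtain ⟨i, j⟩ := v
  simp only at h1 h2
  lift i to ℕ using h1
  lift j to ℕ using h2
  unfold nextT
  rw [Finset.sum_filter, Finset.sum_insert (by simp), Finset.sum_insert (by simp),
    Finset.sum_singleton]
  have e1 : ((j : ℤ) + 1).toNat = j + 1 := by omega
  have e2 : ((i : ℤ) + 1).toNat = i + 1 := by omega
  have p1 : (0 : ℤ) ≤ (j : ℤ) + 1 := by omega
  have p2 : (0 : ℤ) ≤ (i : ℤ) + 1 := by omega
  have p3 : (0 : ℤ) ≤ (i : ℤ) := by omega
  have p4 : (0 : ℤ) ≤ (j : ℤ) := by omega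
  have ei : (if 0 ≤ (i : ℤ) + -1 then x * x ^ ((i : ℤ) + -1).toNat else 0) = x ^ i - 0 ^ i := by
    rcases i with _ | i
    · simp
    · have h : (((i + 1 : ℕ) : ℤ) + -1).toNat = i := by omega
      rw [if_pos (by omega), h, zero_pow (by omega)]; ring
  have ej : (if 0 ≤ (j : ℤ) + -1 then y * y ^ ((j : ℤ) + -1).toNat else 0) = y ^ j - 0 ^ j := by
    rcases j with _ | j
    · simp
    · have h : (((j + 1 : ℕ) : ℤ) + -1).toNat = j := by omega
      rw [if_pos (by omega), h, zero_pow (by omega)]; ring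
  simp only [Prod.mk_add_mk, mono, add_zero, p1, p2, p3, p4, e1, e2, and_true, true_and, if_true,
    Int.toNat_natCast]
  have ei' : x * (if 0 ≤ (i : ℤ) + -1 then x ^ ((i : ℤ) + -1).toNat * y ^ (j + 1) else 0)
      = y ^ (j + 1) * (x ^ i - 0 ^ i) := by
    rw [← ei]; split_ifs <;> ring
  have ej' : y * (if 0 ≤ (j : ℤ) + -1 then x ^ (i + 1) * y ^ ((j : ℤ) + -1).toNat else 0)
      = x ^ (i + 1) * (y ^ j - 0 ^ j) := by
    rw [← ej]; split_ifs <;> ring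
  linear_combination y * ei' + x * ej'

theorem PP_succ (n : ℕ) (x y : ℝ) :
    x * y * PP (n + 1) x y = (y ^ 2 + x * y ^ 2 + x ^ 2) * PP n x y
      - y ^ 2 * PP n 0 y - x ^ 2 * PP n x 0 := by
  rw [PP_succ']
  unfold PP
  simp only [Finset.mul_sum, ← Finset.sum_sub_distrib]
  refine Finset.sum_congr rfl fun p _ => ?_
  rw [← next_sum x y _ (p.2.2.2 _).1 (p.2.2.2 _).2, Finset.mul_sum]

theorem mono_nonneg {x y : ℝ} (hx : 0 ≤ x) (hy : 0 ≤ y) (v : ℤ × ℤ) : 0 ≤ mono x y v := by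
  unfold mono; positivity

theorem mono_le {x y : ℝ} (hx : 0 ≤ x) (hy : 0 ≤ y) (hx1 : x ≤ 1) (hy1 : y ≤ 1) (v : ℤ × ℤ) :
    mono x y v ≤ 1 := by
  unfold mono
  exact mul_le_one₀ (pow_le_one₀ hx hx1) (by positivity) (pow_le_one₀ hy hy1)

theorem PP_nonneg {x y : ℝ} (hx : 0 ≤ x) (hy : 0 ≤ y) (n : ℕ) : 0 ≤ PP n x y :=
  Finset.sum_nonneg fun _ _ => mono_nonneg hx hy _

theorem PP_le_one {x y : ℝ} (hx : 0 ≤ x) (hy : 0 ≤ y) (hx1 : x ≤ 1) (hy1 : y ≤ 1) (n : ℕ) :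
    PP n x y ≤ PP n 1 1 := by
  refine Finset.sum_le_sum fun p _ => ?_
  refine (mono_le hx hy hx1 hy1 _).trans ?_
  simp [mono]

theorem PP_le_pow (n : ℕ) : PP n 1 1 ≤ 3 ^ n := by
  induction n with
  | zero => rw [PP_zero]; simp
  | succ n ih =>
    have h := PP_succ n 1 1
    have h1 := PP_nonneg (x := 0) (y := 1) le_rfl zero_le_one n
    have h2 := PP_nonneg (x := 1) (y := 0) zero_le_one le_rfl n
    rw [pow_succ]
    linarith

theorem PP_summable {t : ℝ} (ht : 0 < t) (ht3 : t < 1 / 3) {x y : ℝ} (hx : 0 ≤ x) (hy : 0 ≤ y)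
    (hx1 : x ≤ 1) (hy1 : y ≤ 1) : Summable (fun n => PP n x y * t ^ n) := by
  refine Summable.of_nonneg_of_le (fun n => mul_nonneg (PP_nonneg hx hy n) (by positivity))
    (fun n => ?_) (summable_geometric_of_lt_one (r := 3 * t) (by positivity) (by linarith))
  rw [mul_pow]
  exact mul_le_mul_of_nonneg_right ((PP_le_one hx hy hx1 hy1 n).trans (PP_le_pow n)) (by positivity)

noncomputable def FF (t x y : ℝ) : ℝ := ∑' n, PP n x y * t ^ n

theorem FF_nonneg {t : ℝ} (ht : 0 < t) {x y : ℝ} (hx : 0 ≤ x) (hy : 0 ≤ y) : 0 ≤ FF t x y :=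
  tsum_nonneg fun n => mul_nonneg (PP_nonneg hx hy n) (by positivity)

theorem FF_le {t : ℝ} (ht : 0 < t) (ht3 : t < 1 / 3) {x y : ℝ} (hx : 0 ≤ x) (hy : 0 ≤ y)
    (hx1 : x ≤ 1) (hy1 : y ≤ 1) : FF t x y ≤ FF t 1 1 :=
  Summable.tsum_le_tsum
    (fun n => mul_le_mul_of_nonneg_right (PP_le_one hx hy hx1 hy1 n) (by positivity))
    (PP_summable ht ht3 hx hy hx1 hy1)
    (PP_summable ht ht3 zero_le_one zero_le_one le_rfl le_rfl)

theorem FF_eq {t : ℝ} (ht : 0 < t) (ht3 : t < 1 / 3) {x y : ℝ} (hx : 0 ≤ x) (hy : 0 ≤ y)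
    (hx1 : x ≤ 1) (hy1 : y ≤ 1) :
    x * y * (FF t x y - 1) = t * (y ^ 2 + x * y ^ 2 + x ^ 2) * FF t x y
      - t * y ^ 2 * FF t 0 y - t * x ^ 2 * FF t x 0 := by
  have s := PP_summable ht ht3 hx hy hx1 hy1
  have h1 := s.hasSum
  have h2 := (PP_summable ht ht3 le_rfl hy zero_le_one hy1).hasSum
  have h3 := (PP_summable ht ht3 hx le_rfl hx1 zero_le_one).hasSum
  have h4 := (((h1.mul_left (t * (y ^ 2 + x * y ^ 2 + x ^ 2))).sub
    (h2.mul_left (t * y ^ 2))).sub (h3.mul_left (t * x ^ 2)))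
  have h5 : FF t x y - 1 = ∑' n, PP (n + 1) x y * t ^ (n + 1) := by
    unfold FF
    rw [s.tsum_eq_zero_add, PP_zero]; simp
  have h6 := ((summable_nat_add_iff 1).2 s).hasSum.mul_left (x * y)
  rw [h5]
  refine h6.unique ?_
  refine Eq.mp (congrArg (fun f => HasSum f _) (funext fun n => ?_)) h4
  have := PP_succ n x y
  linear_combination (-t ^ (n + 1)) * this

theorem telescope (a : ℕ → ℝ) (q C : ℝ) (hq0 : 0 ≤ q) (hq1 : q < 1)
    (ha0 : ∀ n, 0 ≤ a n) (ha : ∀ n, a n ≤ q ^ n) (H G : ℝ → ℝ)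
    (hH : ∀ u, 0 ≤ u → u ≤ 1 → |H u| ≤ C * u) (hG : ∀ u, 0 ≤ u → u ≤ 1 → |G u| ≤ C * u)
    (h1 : ∀ k, H (a (2 * k)) + G (a (2 * k + 1)) = a (2 * k) * a (2 * k + 1))
    (h2 : ∀ k, G (a (2 * k + 1)) + H (a (2 * k + 2)) = a (2 * k + 1) * a (2 * k + 2)) :
    HasSum (fun n : ℕ => (-1 : ℝ) ^ n * a n * a (n + 1)) (H (a 0)) := by
  have ha1 : ∀ n, a n ≤ 1 := fun n => (ha n).trans (pow_le_one₀ hq0 hq1.le)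
  have hs : Summable (fun n : ℕ => (-1 : ℝ) ^ n * a n * a (n + 1)) := by
    refine Summable.of_norm_bounded (summable_geometric_of_lt_one hq0 hq1) fun n => ?_
    rw [norm_mul, norm_mul, norm_pow, norm_neg, norm_one, one_pow, one_mul, Real.norm_eq_abs,
      Real.norm_eq_abs, abs_of_nonneg (ha0 _), abs_of_nonneg (ha0 _)]
    exact (mul_le_of_le_one_right (ha0 _) (ha1 _)).trans (ha n)
  obtain ⟨R, hR⟩ : ∃ R : ℕ → ℝ, R = fun n => if Even n then H (a n) else G (a n) := ⟨_, rfl⟩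
  have hRR : ∀ n, R n + R (n + 1) = a n * a (n + 1) := by
    intro n
    rcases Nat.even_or_odd' n with ⟨k, rfl | rfl⟩
    · have := h1 k
      simpa [hR, Nat.even_add_one] using this
    · have := h2 k
      simpa [hR, Nat.even_add_one] using this
  have hRb : ∀ n, |R n| ≤ C * a n := by
    intro n
    rw [hR]
    dsimp only
    split_ifs
    · exact hH _ (ha0 n) (ha1 n)
    · exact hG _ (ha0 n) (ha1 n)
  have hC : Filter.Tendsto (fun n => C * a n) Filter.atTop (nhds 0) := by
    have := squeeze_zero ha0 ha (tendsto_pow_atTop_nhds_zero_of_lt_one hq0 hq1)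
    simpa using this.const_mul C
  have hb : Filter.Tendsto (fun n => (-1 : ℝ) ^ n * R n) Filter.atTop (nhds 0) := by
    refine squeeze_zero_norm (fun n => ?_) hC
    rw [norm_mul, norm_pow, norm_neg, norm_one, one_pow, one_mul]
    exact hRb n
  have hsum : ∀ N, ∑ n ∈ Finset.range N, (-1 : ℝ) ^ n * a n * a (n + 1)
      = H (a 0) - (-1 : ℝ) ^ N * R N := by
    intro N
    have h0 : H (a 0) = (-1 : ℝ) ^ 0 * R 0 := by simp [hR]
    rw [h0, ← Finset.sum_range_sub' (fun n => (-1 : ℝ) ^ n * R n)]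
    refine Finset.sum_congr rfl fun n _ => ?_
    rw [mul_assoc, ← hRR n, pow_succ]; ring
  have hl : Filter.Tendsto (fun N => ∑ n ∈ Finset.range N, (-1 : ℝ) ^ n * a n * a (n + 1))
      Filter.atTop (nhds (H (a 0))) := by
    simp only [hsum]
    simpa using hb.const_sub (H (a 0))
  rw [← tendsto_nhds_unique hs.hasSum.tendsto_sum_nat hl]
  exact hs.hasSum

theorem X_root {t u : ℝ} (ht : 0 < t) (ht3 : t < 1 / 3) (hu : 0 ≤ u) (hu1 : u ≤ 1) (X : ℝ)
    (hX : X = u * ((1 - t * u) - Real.sqrt ((1 - t * u) ^ 2 - 4 * t ^ 2)) / (2 * t)) :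
    0 ≤ X ∧ X ≤ 2 * t / (1 - t) * u ∧ X * u = t * (u ^ 2 + X * u ^ 2 + X ^ 2) := by
  have htu : t * u ≤ t := mul_le_of_le_one_right ht.le hu1
  have hd : 0 ≤ (1 - t * u) ^ 2 - 4 * t ^ 2 := by nlinarith
  have hsq := Real.sq_sqrt hd
  have hd0 := Real.sqrt_nonneg ((1 - t * u) ^ 2 - 4 * t ^ 2)
  have hdle : Real.sqrt ((1 - t * u) ^ 2 - 4 * t ^ 2) ≤ 1 - t * u :=
    Real.sqrt_le_iff.2 ⟨by linarith, by nlinarith⟩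
  generalize Real.sqrt ((1 - t * u) ^ 2 - 4 * t ^ 2) = d at *
  obtain ⟨r, hr⟩ : ∃ r, r = ((1 - t * u) - d) / (2 * t) := ⟨_, rfl⟩
  have hXr : X = u * r := by rw [hX, hr]; ring
  have hr' : 2 * t * r = (1 - t * u) - d := by rw [hr]; field_simp
  have hr0 : 0 ≤ r := by rw [hr]; exact div_nonneg (by linarith) (by linarith)
  have hrm : r * (1 - t * u + d) = 2 * t := by
    have : (2 * t) * (r * (1 - t * u + d)) = (2 * t) * (2 * t) := by
      linear_combination (1 - t * u + d) * hr' - hsq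
    exact mul_left_cancel₀ (by positivity) this
  have hrq : r ≤ 2 * t / (1 - t) := by
    rw [le_div_iff₀ (by linarith), ← hrm]
    exact mul_le_mul_of_nonneg_left (by linarith) hr0
  refine ⟨by rw [hXr]; positivity, ?_, ?_⟩
  · rw [hXr, mul_comm]; exact mul_le_mul_of_nonneg_right hrq hu
  · have hd' : d = 1 - t * u - 2 * t * r := by linarith
    rw [hd'] at hrm
    rw [hXr]
    linear_combination (u ^ 2 / 2) * hrm

theorem Y_root {t u : ℝ} (ht : 0 < t) (ht3 : t < 1 / 3) (hu : 0 ≤ u) (hu1 : u ≤ 1) (Y : ℝ)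
    (hY : Y = u * (1 - Real.sqrt (1 - 4 * t ^ 2 * (1 + u))) / (2 * t * (1 + u))) :
    0 ≤ Y ∧ Y ≤ 2 * t / (1 - t) * u ∧ u * Y = t * (Y ^ 2 + u * Y ^ 2 + u ^ 2) := by
  have hd : 0 ≤ 1 - 4 * t ^ 2 * (1 + u) := by nlinarith
  have hsq := Real.sq_sqrt hd
  have hd0 := Real.sqrt_nonneg (1 - 4 * t ^ 2 * (1 + u))
  have hdle : Real.sqrt (1 - 4 * t ^ 2 * (1 + u)) ≤ 1 :=
    Real.sqrt_le_iff.2 ⟨by linarith, by nlinarith [mul_nonneg (sq_nonneg t) hu, sq_nonneg t]⟩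
  generalize Real.sqrt (1 - 4 * t ^ 2 * (1 + u)) = d at *
  obtain ⟨r, hr⟩ : ∃ r, r = (1 - d) / (2 * t * (1 + u)) := ⟨_, rfl⟩
  have hYr : Y = u * r := by rw [hY, hr]; ring
  have hr' : 2 * t * (1 + u) * r = 1 - d := by
    rw [hr]; exact mul_div_cancel₀ _ (by positivity)
  have hr0 : 0 ≤ r := by rw [hr]; exact div_nonneg (by linarith) (by positivity)
  have hrm : r * (1 + d) = 2 * t := by
    have : (2 * t * (1 + u)) * (r * (1 + d)) = (2 * t * (1 + u)) * (2 * t) := by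
      linear_combination (1 + d) * hr' - hsq
    exact mul_left_cancel₀ (by positivity) this
  have hrq : r ≤ 2 * t / (1 - t) := by
    rw [le_div_iff₀ (by linarith), ← hrm]
    exact mul_le_mul_of_nonneg_left (by linarith) hr0
  refine ⟨by rw [hYr]; positivity, ?_, ?_⟩
  · rw [hYr, mul_comm]; exact mul_le_mul_of_nonneg_right hrq hu
  · have hd' : d = 1 - 2 * t * (1 + u) * r := by linarith
    rw [hd'] at hrm
    rw [hYr]
    linear_combination (u ^ 2 / 2) * hrm

theorem FF_kernel {t : ℝ} (ht : 0 < t) (ht3 : t < 1 / 3) {x y : ℝ} (hx : 0 ≤ x) (hy : 0 ≤ y)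
    (hx1 : x ≤ 1) (hy1 : y ≤ 1) (hK : x * y = t * (y ^ 2 + x * y ^ 2 + x ^ 2)) :
    t * x ^ 2 * FF t x 0 + t * y ^ 2 * FF t 0 y = x * y := by
  have h := FF_eq ht ht3 hx hy hx1 hy1
  linear_combination h - FF t x y * hK

theorem seq_bound (a : ℕ → ℝ) (q : ℝ) (hq0 : 0 ≤ q) (hq1 : q < 1) (h0 : a 0 = 1)
    (h : ∀ n, 0 ≤ a n → a n ≤ 1 → 0 ≤ a (n + 1) ∧ a (n + 1) ≤ q * a n) :
    ∀ n, 0 ≤ a n ∧ a n ≤ q ^ n := by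
  intro n
  induction n with
  | zero => simp [h0]
  | succ n ih =>
    obtain ⟨h1, h2⟩ := h n ih.1 (ih.2.trans (pow_le_one₀ hq0 hq1.le))
    refine ⟨h1, h2.trans ?_⟩
    rw [pow_succ']
    exact mul_le_mul_of_nonneg_left ih.2 hq0

theorem stmt_17 (t : ℝ) (ht : 0 < t) (ht3 : t < 1 / 3)
    (Xp Yp : ℝ → ℝ)
    (hXp : ∀ u, Xp u = u * ((1 - t * u) - Real.sqrt ((1 - t * u) ^ 2 - 4 * t ^ 2)) / (2 * t))
    (hYp : ∀ u, Yp u = u * (1 - Real.sqrt (1 - 4 * t ^ 2 * (1 + u))) / (2 * t * (1 + u)))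
    (A B : ℕ → ℝ)
    (hA0 : A 0 = 1)
    (hA : ∀ k : ℕ, A (2 * k + 1) = Yp (A (2 * k)) ∧ A (2 * k + 2) = Xp (A (2 * k + 1)))
    (hB0 : B 0 = 1)
    (hB : ∀ k : ℕ, B (2 * k + 1) = Xp (B (2 * k)) ∧ B (2 * k + 2) = Yp (B (2 * k + 1))) :
    Summable (fun n : ℕ => (numWalksT n : ℝ) * t ^ n) ∧
    Summable (fun n : ℕ => (-1 : ℝ) ^ n * A n * A (n + 1)) ∧
    Summable (fun n : ℕ => (-1 : ℝ) ^ n * B n * B (n + 1)) ∧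
    (∑' n : ℕ, (numWalksT n : ℝ) * t ^ n)
      = (1 - (∑' n : ℕ, (-1 : ℝ) ^ n * A n * A (n + 1))
           - (∑' n : ℕ, (-1 : ℝ) ^ n * B n * B (n + 1))) / (1 - 3 * t) := by
  have hq0 : 0 ≤ 2 * t / (1 - t) := div_nonneg (by linarith) (by linarith)
  have hq1 : 2 * t / (1 - t) < 1 := by rw [div_lt_one (by linarith)]; linarith
  have hX := fun u h1 h2 => X_root (u := u) ht ht3 h1 h2 (Xp u) (hXp u)
  have hY := fun u h1 h2 => Y_root (u := u) ht ht3 h1 h2 (Yp u) (hYp u)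
  have bA := seq_bound A _ hq0 hq1 hA0 (fun n h1 h2 => by
    rcases Nat.even_or_odd' n with ⟨k, rfl | rfl⟩
    · rw [(hA k).1]; exact ⟨(hY _ h1 h2).1, (hY _ h1 h2).2.1⟩
    · rw [(hA k).2]; exact ⟨(hX _ h1 h2).1, (hX _ h1 h2).2.1⟩)
  have bB := seq_bound B _ hq0 hq1 hB0 (fun n h1 h2 => by
    rcases Nat.even_or_odd' n with ⟨k, rfl | rfl⟩
    · rw [(hB k).1]; exact ⟨(hX _ h1 h2).1, (hX _ h1 h2).2.1⟩
    · rw [(hB k).2]; exact ⟨(hY _ h1 h2).1, (hY _ h1 h2).2.1⟩)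
  have A1 : ∀ n, A n ≤ 1 := fun n => (bA n).2.trans (pow_le_one₀ hq0 hq1.le)
  have B1 : ∀ n, B n ≤ 1 := fun n => (bB n).2.trans (pow_le_one₀ hq0 hq1.le)
  have key : ∀ u f : ℝ, 0 ≤ u → u ≤ 1 → 0 ≤ f → f ≤ FF t 1 1 →
      |t * u ^ 2 * f| ≤ t * FF t 1 1 * u := by
    intro u f h0 h1 h2 h3
    rw [abs_of_nonneg (by positivity)]
    have e1 : u ^ 2 ≤ u := by nlinarith
    have e2 : u ^ 2 * f ≤ u * FF t 1 1 := mul_le_mul e1 h3 h2 h0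
    nlinarith
  have hH : ∀ u, 0 ≤ u → u ≤ 1 → |(fun u => t * u ^ 2 * FF t u 0) u| ≤ t * FF t 1 1 * u :=
    fun u h0 h1 => key u _ h0 h1 (FF_nonneg ht h0 le_rfl) (FF_le ht ht3 h0 le_rfl h1 zero_le_one)
  have hG : ∀ u, 0 ≤ u → u ≤ 1 → |(fun u => t * u ^ 2 * FF t 0 u) u| ≤ t * FF t 1 1 * u :=
    fun u h0 h1 => key u _ h0 h1 (FF_nonneg ht le_rfl h0) (FF_le ht ht3 le_rfl h0 zero_le_one h1)
  have SA := telescope A _ _ hq0 hq1 (fun n => (bA n).1) (fun n => (bA n).2) _ _ hH hG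
    (fun k => by
      refine FF_kernel ht ht3 (bA _).1 (bA _).1 (A1 _) (A1 _) ?_
      rw [(hA k).1]; exact (hY _ (bA _).1 (A1 _)).2.2)
    (fun k => by
      have := FF_kernel ht ht3 (bA (2 * k + 2)).1 (bA (2 * k + 1)).1 (A1 _) (A1 _) (by
        rw [(hA k).2]; exact (hX _ (bA _).1 (A1 _)).2.2)
      linear_combination this)
  have SB := telescope B _ _ hq0 hq1 (fun n => (bB n).1) (fun n => (bB n).2) _ _ hG hH
    (fun k => by
      have := FF_kernel ht ht3 (bB (2 * k + 1)).1 (bB (2 * k)).1 (B1 _) (B1 _) (by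
        rw [(hB k).1]; exact (hX _ (bB _).1 (B1 _)).2.2)
      linear_combination this)
    (fun k => by
      refine FF_kernel ht ht3 (bB _).1 (bB _).1 (B1 _) (B1 _) ?_
      rw [(hB k).2]; exact (hY _ (bB _).1 (B1 _)).2.2)
  have sF := PP_summable ht ht3 zero_le_one zero_le_one le_rfl le_rfl
  have eF := FF_eq ht ht3 zero_le_one zero_le_one le_rfl le_rfl
  have hF : FF t 1 1 = ∑' n : ℕ, (numWalksT n : ℝ) * t ^ n := by
    unfold FF; simp only [PP_one]
  simp only [PP_one] at sF
  refine ⟨sF, SA.summable, SB.summable, ?_⟩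
  rw [SA.tsum_eq, SB.tsum_eq, ← hF, eq_div_iff (by linarith), hA0, hB0]
  linear_combination eF
end

section
/- For every integer m ≥ 1, the function f : ℝ → ℝ defined by f(r) = (1 − r^{4m})·√(1 + 6r² + r⁴) + (1 + r²)(1 + r^{4m}) has a zero in the open interval (1, 2) and a zero in the open interval (−2, −1). In particular f(±1) = 4 and f(±2) < 0. -/
theorem stmt_18 (m : ℕ) (hm : 1 ≤ m) (f : ℝ → ℝ)
    (hf : ∀ r, f r = (1 - r ^ (4 * m)) * Real.sqrt (1 + 6 * r ^ 2 + r ^ 4)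
      + (1 + r ^ 2) * (1 + r ^ (4 * m))) :
    (∃ r ∈ Set.Ioo (1 : ℝ) 2, f r = 0) ∧
    (∃ r ∈ Set.Ioo (-2 : ℝ) (-1), f r = 0) ∧
    f 1 = 4 ∧ f (-1) = 4 ∧ f 2 < 0 ∧ f (-2) < 0 := by
  have heven : ∀ r, f (-r) = f r := by
    intro r
    have h4 : Even (4 * m) := ⟨2 * m, by ring⟩
    have h4' : Even 4 := ⟨2, rfl⟩
    rw [hf, hf, h4.neg_pow, h4'.neg_pow, neg_sq]
  have h1 : f 1 = 4 := by
    rw [hf]; norm_num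
  have h2 : f 2 < 0 := by
    rw [hf]
    have hs : (6.4 : ℝ) ≤ Real.sqrt (1 + 6 * 2 ^ 2 + 2 ^ 4) := by
      apply Real.le_sqrt_of_sq_le
      norm_num
    have hN : (16 : ℝ) ≤ 2 ^ (4 * m) := by
      calc (16 : ℝ) = 2 ^ 4 := by norm_num
        _ ≤ 2 ^ (4 * m) := pow_le_pow_right₀ (by norm_num) (by omega)
    generalize Real.sqrt (1 + 6 * 2 ^ 2 + 2 ^ 4) = s at hs ⊢
    generalize (2 : ℝ) ^ (4 * m) = N at hN ⊢
    norm_num at hs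
    nlinarith [mul_nonneg (sub_nonneg.2 hs) (sub_nonneg.2 hN)]
  have hc : Continuous f := by
    rw [funext hf]
    fun_prop
  obtain ⟨r, hr, hr0⟩ : ∃ r ∈ Set.Ioo (1 : ℝ) 2, f r = 0 :=
    intermediate_value_Ioo' (by norm_num) hc.continuousOn ⟨h2, by rw [h1]; norm_num⟩
  refine ⟨⟨r, hr, hr0⟩, ⟨-r, ⟨by linarith [hr.2], by linarith [hr.1]⟩, by rw [heven, hr0]⟩,
    h1, by rw [heven, h1], h2, by rw [heven]; exact h2⟩
end

section
/- For every integer n ≥ 1 and every nonzero real number r, setting q = i·r ∈ ℂ, one has q²(q² − 3q + 1)(q^{4n} + 1) − q(q + 1)²(q² − 3q + 1)(q^{3n} + qⁿ) − (q⁶ − 4q⁵ + 3q⁴ + 6q³ + 3q² − 4q + 1)·q^{2n} ≠ 0. -/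
/-- Reduction of the equation to the variables `s = q + 1/q`, `w = y + 1/y`. -/
lemma reduce_aux (q y s w : ℂ) (hq : q ≠ 0) (hy : y ≠ 0) (hs : s * q = q ^ 2 + 1)
    (hw : w * y = y ^ 2 + 1)
    (h : q ^ 2 * (q ^ 2 - 3 * q + 1) * (y ^ 4 + 1)
      - q * (q + 1) ^ 2 * (q ^ 2 - 3 * q + 1) * (y ^ 3 + y)
      - (q ^ 6 - 4 * q ^ 5 + 3 * q ^ 4 + 6 * q ^ 3 + 3 * q ^ 2 - 4 * q + 1) * y ^ 2 = 0) :
    (s - 3) * (w ^ 2 - (s + 2) * w) = s ^ 3 - 4 * s ^ 2 + 2 * s + 8 := by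
  have e1 : s = q + q⁻¹ := by field_simp; linear_combination hs
  have e2 : w = y + y⁻¹ := by field_simp; linear_combination hw
  have h3 : q ^ 3 * y ^ 2 ≠ 0 := by positivity
  subst e1 e2
  apply mul_left_cancel₀ h3
  field_simp
  linear_combination h

lemma even_aux (a w : ℝ)
    (h : (Complex.I * a - 3) * ((w : ℂ) ^ 2 - (Complex.I * a + 2) * w)
      = (Complex.I * a) ^ 3 - 4 * (Complex.I * a) ^ 2 + 2 * (Complex.I * a) + 8) : False := by
  have h1 := congrArg Complex.re h
  have h2 := congrArg Complex.im h
  simp [pow_succ] at h1 h2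
  have h1' : a ^ 2 * (w - 4) = 3 * w ^ 2 - 6 * w + 8 := by linear_combination h1
  have h2' : a * (w ^ 2 + w + a ^ 2 - 2) = 0 := by linear_combination h2
  rcases mul_eq_zero.1 h2' with h0 | h0
  · subst h0
    nlinarith [sq_nonneg (w - 1)]
  · have hw : 0 < w - 4 := by
      by_contra hc
      nlinarith [sq_nonneg (w - 1), mul_nonneg (sq_nonneg a) (sub_nonneg.2 (not_lt.1 hc))]
    nlinarith [sq_nonneg a]

lemma odd_aux (a b : ℝ)
    (h : (Complex.I * a - 3) * ((Complex.I * b : ℂ) ^ 2 - (Complex.I * a + 2) * (Complex.I * b))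
      = (Complex.I * a) ^ 3 - 4 * (Complex.I * a) ^ 2 + 2 * (Complex.I * a) + 8) : False := by
  have h1 := congrArg Complex.re h
  have h2 := congrArg Complex.im h
  simp [pow_succ] at h1 h2
  have h1' : 3 * b ^ 2 - a * b - 4 * a ^ 2 = 8 := by linear_combination h1
  have h2' : a ^ 3 + a ^ 2 * b - a * b ^ 2 = 2 * a - 6 * b := by linear_combination h2
  have h3 : (b - a) ^ 2 * (9 * b + 8 * a) = 0 := by
    linear_combination 4 * h2' - (a - 3 * b) * h1'
  rcases mul_eq_zero.1 h3 with h0 | h0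
  · have : b = a := by linarith [pow_eq_zero_iff (two_ne_zero) |>.1 h0]
    subst this
    nlinarith [sq_nonneg b]
  · have : b = -8 / 9 * a := by linarith
    subst this
    nlinarith [sq_nonneg a]

theorem stmt_19 (n : ℕ) (hn : 1 ≤ n) (r : ℝ) (hr : r ≠ 0) :
    (Complex.I * (r : ℂ)) ^ 2 * ((Complex.I * (r : ℂ)) ^ 2 - 3 * (Complex.I * (r : ℂ)) + 1)
        * ((Complex.I * (r : ℂ)) ^ (4 * n) + 1)
      - (Complex.I * (r : ℂ)) * ((Complex.I * (r : ℂ)) + 1) ^ 2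
        * ((Complex.I * (r : ℂ)) ^ 2 - 3 * (Complex.I * (r : ℂ)) + 1)
        * ((Complex.I * (r : ℂ)) ^ (3 * n) + (Complex.I * (r : ℂ)) ^ n)
      - ((Complex.I * (r : ℂ)) ^ 6 - 4 * (Complex.I * (r : ℂ)) ^ 5
          + 3 * (Complex.I * (r : ℂ)) ^ 4 + 6 * (Complex.I * (r : ℂ)) ^ 3
          + 3 * (Complex.I * (r : ℂ)) ^ 2 - 4 * (Complex.I * (r : ℂ)) + 1)
        * (Complex.I * (r : ℂ)) ^ (2 * n) ≠ 0 := by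
  intro h
  have hq : Complex.I * (r : ℂ) ≠ 0 := mul_ne_zero Complex.I_ne_zero (by exact_mod_cast hr)
  have hrc : (r : ℂ) ≠ 0 := by exact_mod_cast hr
  have hs : (Complex.I * ((r - r⁻¹ : ℝ) : ℂ)) * (Complex.I * (r : ℂ))
      = (Complex.I * (r : ℂ)) ^ 2 + 1 := by
    push_cast
    field_simp
    linear_combination (-1 : ℂ) * Complex.I_sq
  have key : ∀ w : ℂ, w * (Complex.I * (r : ℂ)) ^ n = ((Complex.I * (r : ℂ)) ^ n) ^ 2 + 1 → _ :=
    fun w hw => reduce_aux _ _ _ w hq (pow_ne_zero n hq) hs hw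
      (by rw [← pow_mul, ← pow_mul, ← pow_mul, mul_comm n, mul_comm n, mul_comm n]; exact h)
  rcases Nat.even_or_odd' n with ⟨k, hk | hk⟩
  · have hy : (Complex.I * (r : ℂ)) ^ n = (((-r ^ 2) ^ k : ℝ) : ℂ) := by
      rw [hk, pow_mul, mul_pow, Complex.I_sq]; push_cast; ring
    have hc : (-r ^ 2) ^ k ≠ 0 := pow_ne_zero _ (neg_ne_zero.2 (pow_ne_zero _ hr))
    generalize (-r ^ 2) ^ k = c at hy hc
    rw [hy] at key
    have hcc : (c : ℂ) ≠ 0 := by exact_mod_cast hc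
    exact even_aux _ _ (key ((c + c⁻¹ : ℝ) : ℂ) (by push_cast; field_simp))
  · have hy : (Complex.I * (r : ℂ)) ^ n = Complex.I * (((-r ^ 2) ^ k * r : ℝ) : ℂ) := by
      rw [hk, pow_succ, pow_mul, mul_pow, Complex.I_sq]; push_cast; ring
    have hc : (-r ^ 2) ^ k * r ≠ 0 :=
      mul_ne_zero (pow_ne_zero _ (neg_ne_zero.2 (pow_ne_zero _ hr))) hr
    generalize (-r ^ 2) ^ k * r = c at hy hc
    rw [hy] at key
    have hcc : (c : ℂ) ≠ 0 := by exact_mod_cast hc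
    exact odd_aux _ _ (key (Complex.I * ((c - c⁻¹ : ℝ) : ℂ)) (by
      push_cast
      field_simp
      linear_combination (-1 : ℂ) * Complex.I_sq))
end
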